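/- arXiv:math/0104176 — 4 statements merged into one kernel-verified Lean document; each statement's English description precedes it below -/
import Mathlib

section
/- For (w,s) in ℂ² with s ≠ 0 and s ≠ w, the function Z_ℚ(w,s), defined on Re(w) < Re(s) < 0 by Z_ℚ(w,s) = ∫₀^∞ θ(t²)^s θ(1/t²)^{w-s} dt/t, extends to the meromorphic expression Z_ℚ(w,s) = -1/s + 1/(s-w) + ∫₀¹ (θ(1/t²)^w - 1)(t^{-s} + t^{-(w-s)}) dt/t, where the last integral defines an entire function on ℂ², and consequently Z_ℚ(w,s) = Z_ℚ(w, w-s). -/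
/-- The Jacobi theta function `θ(t) = ∑_{n ∈ ℤ} e^{-π n² t}` for real `t`. -/
noncomputable def theta (t : ℝ) : ℝ := ∑' n : ℤ, Real.exp (-Real.pi * (n : ℝ)^2 * t)

/-- The entire correction term `∫₀¹ (θ(1/t²)^w - 1)(t^{-s} + t^{-(w-s)}) dt/t`. -/
noncomputable def G (w s : ℂ) : ℂ :=
  ∫ t in Set.Ioo (0:ℝ) 1,
    (((theta (1/t^2) : ℂ)) ^ w - 1) * ((t : ℂ) ^ (-s) + (t : ℂ) ^ (-(w - s))) / t

/-!
The inversion `t ↦ 1/t` folds the integral over `(1, ∞)` onto `(0, 1)`, where it becomes the same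
integral with `s` replaced by `w - s`. On `(0, 1)` the functional equation
`θ(t²) = θ(1/t²) / t` turns the integrand into `t^{-s} θ(1/t²)^w / t`; splitting off `t^{-s} / t`
produces the pole `-1/s` and leaves the integral of `(θ(1/t²)^w - 1) t^{-s} / t`.

This remaining integrand is `(exp (l₁ t) - exp (l₂ t)) / t` for two linear forms `l₁ t`, `l₂ t` in
`(w, s)` which differ by `log θ(1/t²) = O(e^{-π/t²})`. Expanding both exponentials at the origin of
`ℂ²`, the decay of `l₁ t - l₂ t` dominates every growth factor `exp (ρ ‖lᵢ t‖)`, so the series can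
be integrated term by term and converges on all of `ℂ²`.
-/

open MeasureTheory Set
open scoped ENNReal NNReal

section FormalMultilinearSeries

variable {𝕜 E F H : Type*} [NontriviallyNormedField 𝕜]
  [NormedAddCommGroup E] [NormedSpace 𝕜 E] [NormedAddCommGroup F] [NormedSpace 𝕜 F]
  [NormedAddCommGroup H] [NormedSpace 𝕜 H]

theorem norm_apply_le_mul_pow_of_norm_mul_pow_le {q : FormalMultilinearSeries 𝕜 E F} {ρ C : ℝ}
    (hρ : 0 < ρ) {n : ℕ} (hq : ‖q n‖ * ρ ^ n ≤ C) (y : E) :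
    ‖q n fun _ ↦ y‖ ≤ C * (‖y‖ / ρ) ^ n :=
  calc ‖q n fun _ ↦ y‖ ≤ ‖q n‖ * ‖y‖ ^ n := by simpa using (q n).le_opNorm fun _ ↦ y
    _ = ‖q n‖ * ρ ^ n * (‖y‖ / ρ) ^ n := by rw [div_pow]; field_simp
    _ ≤ C * (‖y‖ / ρ) ^ n := by gcongr

theorem norm_compContinuousLinearMap_sub_le
    (p : FormalMultilinearSeries 𝕜 F H) (u v : E →L[𝕜] F) (n : ℕ) :
    ‖p.compContinuousLinearMap u n - p.compContinuousLinearMap v n‖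
      ≤ ‖p n‖ * n * max ‖u‖ ‖v‖ ^ (n - 1) * ‖u - v‖ := by
  set Φ := ContinuousMultilinearMap.compContinuousLinearMapLRight (E := fun _ : Fin n ↦ E) (p n)
  have hconst (w : E →L[𝕜] F) : ‖fun _ : Fin n ↦ w‖ ≤ ‖w‖ := pi_norm_const_le w
  calc ‖Φ (fun _ ↦ u) - Φ (fun _ ↦ v)‖
      ≤ ‖Φ‖ * n * max ‖fun _ : Fin n ↦ u‖ ‖fun _ : Fin n ↦ v‖ ^ (n - 1)
          * ‖(fun _ : Fin n ↦ u) - fun _ ↦ v‖ := by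
        simpa only [Fintype.card_fin] using Φ.norm_image_sub_le (fun _ ↦ u) fun _ ↦ v
    _ ≤ ‖p n‖ * n * max ‖u‖ ‖v‖ ^ (n - 1) * ‖u - v‖ := by
        gcongr
        · exact ContinuousMultilinearMap.norm_compContinuousLinearMapLRight_le _ (p n)
        · exact hconst u
        · exact hconst v
        · exact hconst (u - v)

theorem continuous_compContinuousLinearMap
    (p : FormalMultilinearSeries 𝕜 F H) (n : ℕ) :
    Continuous fun u : E →L[𝕜] F ↦ p.compContinuousLinearMap u n :=
  (ContinuousMultilinearMap.compContinuousLinearMapLRight (E := fun _ : Fin n ↦ E) (p n)).cont.comp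
    (continuous_pi fun _ ↦ continuous_id)

end FormalMultilinearSeries

theorem integrable_of_norm_mul_le {α F : Type*} [MeasurableSpace α] {μ : Measure α}
    [NormedAddCommGroup F] {u : α → F} {g : α → ℝ} {C : ℝ} (hC : 0 < C)
    (hu : AEStronglyMeasurable u μ) (hg : Integrable g μ) (hug : ∀ᵐ x ∂μ, ‖u x‖ * C ≤ g x) :
    Integrable u μ := by
  refine (hg.div_const C).mono' hu ?_
  filter_upwards [hug] with x hx using (le_div_iff₀ hC).mpr hx

section PowerSeriesIntegral

variable {α 𝕜 E F : Type*} [MeasurableSpace α] {μ : Measure α} [RCLike 𝕜]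
  [NormedAddCommGroup E] [NormedSpace 𝕜 E]
  [NormedAddCommGroup F] [NormedSpace 𝕜 F] [NormedSpace ℝ F]
  {f : α → E → F} {p : α → FormalMultilinearSeries 𝕜 E F} {y₀ : E} {r : ℝ≥0∞}

theorem le_radius_integral
    (hbound : ∀ ρ : ℝ≥0, ρ < r → ∃ g : α → ℝ, Integrable g μ ∧
      ∀ n, ∀ᵐ x ∂μ, ‖p x n‖ * (ρ : ℝ) ^ n ≤ g x) :
    r ≤ FormalMultilinearSeries.radius (𝕜 := 𝕜) fun n ↦ ∫ x, p x n ∂μ := by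
  refine ENNReal.le_of_forall_nnreal_lt fun ρ hρ ↦ ?_
  obtain ⟨g, hg, hpg⟩ := hbound ρ hρ
  refine FormalMultilinearSeries.le_radius_of_bound _ (∫ x, g x ∂μ) fun n ↦ ?_
  calc ‖∫ x, p x n ∂μ‖ * (ρ : ℝ) ^ n
      ≤ (∫ x, ‖p x n‖ ∂μ) * (ρ : ℝ) ^ n := by gcongr; exact norm_integral_le_integral_norm _
    _ = ∫ x, ‖p x n‖ * (ρ : ℝ) ^ n ∂μ := (integral_mul_const _ _).symm
    _ ≤ ∫ x, g x ∂μ :=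
      integral_mono_of_nonneg (.of_forall fun x ↦ by positivity) hg (hpg n)

theorem hasFPowerSeriesOnBall_integral (hr : 0 < r)
    (hp : ∀ n, AEStronglyMeasurable (p · n) μ)
    (hbound : ∀ ρ : ℝ≥0, ρ < r → ∃ g : α → ℝ, Integrable g μ ∧
      ∀ n, ∀ᵐ x ∂μ, ‖p x n‖ * (ρ : ℝ) ^ n ≤ g x)
    (hf : ∀ᵐ x ∂μ, HasFPowerSeriesOnBall (f x) (p x) y₀ r) :
    HasFPowerSeriesOnBall (fun y ↦ ∫ x, f x y ∂μ) (fun n ↦ ∫ x, p x n ∂μ) y₀ r where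
  r_le := le_radius_integral hbound
  r_pos := hr
  hasSum {y} hy := by
    obtain ⟨ρ, hyρ, hρr⟩ := ENNReal.lt_iff_exists_nnreal_btwn.mp (mem_eball_zero_iff.mp hy)
    have hyρ : ‖y‖ < ρ := by simpa [← ofReal_norm, ENNReal.ofReal_lt_coe_iff] using hyρ
    have hρ : (0 : ℝ) < ρ := (norm_nonneg y).trans_lt hyρ
    have hgeom : HasSum (fun n : ℕ ↦ (‖y‖ / ρ) ^ n) (1 - ‖y‖ / ρ)⁻¹ :=
      hasSum_geometric_of_lt_one (by positivity) ((div_lt_one hρ).mpr hyρ)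
    obtain ⟨g, hg, hpg⟩ := hbound ρ hρr
    simp_rw [ContinuousMultilinearMap.integral_apply
      (integrable_of_norm_mul_le (pow_pos hρ _) (hp _) hg (hpg _))]
    refine hasSum_integral_of_dominated_convergence (fun n x ↦ g x * (‖y‖ / ρ) ^ n)
      (fun n ↦ ?_) (fun n ↦ ?_) (.of_forall fun x ↦ (hgeom.mul_left _).summable) ?_ ?_
    · exact (ContinuousMultilinearMap.apply 𝕜 _ F
        fun _ ↦ y).continuous.comp_aestronglyMeasurable (hp n)
    · filter_upwards [hpg n] with x hx using norm_apply_le_mul_pow_of_norm_mul_pow_le hρ hx y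
    · simp_rw [tsum_mul_left]
      exact hg.mul_const _
    · filter_upwards [hf] with x hx using hx.hasSum hy

end PowerSeriesIntegral

section ExpIntegral

variable {α E : Type*} [MeasurableSpace α] {μ : Measure α}
  [NormedAddCommGroup E] [NormedSpace ℂ E]

theorem norm_expSeries (n : ℕ) : ‖NormedSpace.expSeries ℂ ℂ n‖ = (n.factorial : ℝ)⁻¹ := by
  simp [NormedSpace.expSeries, norm_smul]

theorem norm_expSeries_comp_sub_mul_pow_le (l₁ l₂ : E →L[ℂ] ℂ) {ρ : ℝ} (hρ : 0 ≤ ρ) (n : ℕ) :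
    ‖(NormedSpace.expSeries ℂ ℂ).compContinuousLinearMap l₁ n
        - (NormedSpace.expSeries ℂ ℂ).compContinuousLinearMap l₂ n‖ * ρ ^ n
      ≤ ρ * ‖l₁ - l₂‖ * Real.exp (ρ * max ‖l₁‖ ‖l₂‖) := by
  set M := max ‖l₁‖ ‖l₂‖
  have hdiff := norm_compContinuousLinearMap_sub_le (NormedSpace.expSeries ℂ ℂ) l₁ l₂ n
  rcases n with _ | n
  · have : 0 ≤ ρ * ‖l₁ - l₂‖ * Real.exp (ρ * M) := by positivity
    simpa using hdiff.trans (by simpa using this)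
  calc _ ≤ ((n + 1).factorial : ℝ)⁻¹ * (n + 1 : ℕ) * M ^ n * ‖l₁ - l₂‖ * ρ ^ (n + 1) := by
        gcongr
        refine hdiff.trans ?_
        rw [Nat.add_sub_cancel]
        gcongr
        exact (norm_expSeries (n + 1)).le
    _ = ρ * ‖l₁ - l₂‖ * ((ρ * M) ^ n / n.factorial) := by
        rw [Nat.factorial_succ, mul_pow, pow_succ]
        push_cast
        field_simp
    _ ≤ ρ * ‖l₁ - l₂‖ * Real.exp (ρ * M) := by
        gcongr
        exact Real.pow_div_factorial_le_exp _ (by positivity) n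

theorem norm_exp_sub_exp_le (a b : ℂ) :
    ‖Complex.exp a - Complex.exp b‖ ≤ ‖a - b‖ * Real.exp (3 * max ‖a‖ ‖b‖) := by
  have hfactor : Complex.exp a - Complex.exp b = Complex.exp b * (Complex.exp (a - b) - 1) := by
    rw [mul_sub_one, ← Complex.exp_add, add_sub_cancel]
  have hsub : ‖Complex.exp (a - b) - 1‖ ≤ ‖a - b‖ * Real.exp ‖a - b‖ := by
    simpa using Complex.norm_exp_sub_sum_le_norm_mul_exp (a - b) 1
  calc ‖Complex.exp a - Complex.exp b‖
      ≤ Real.exp ‖b‖ * (‖a - b‖ * Real.exp ‖a - b‖) := by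
        rw [hfactor, norm_mul]
        gcongr
        exact Complex.norm_exp_le_exp_norm b
    _ = ‖a - b‖ * Real.exp (‖b‖ + ‖a - b‖) := by rw [Real.exp_add]; ring
    _ ≤ ‖a - b‖ * Real.exp (3 * max ‖a‖ ‖b‖) := by
        gcongr
        linarith [norm_sub_le a b, le_max_left ‖a‖ ‖b‖, le_max_right ‖a‖ ‖b‖]

theorem hasFPowerSeriesOnBall_exp_comp (l : E →L[ℂ] ℂ) :
    HasFPowerSeriesOnBall (fun y ↦ Complex.exp (l y))
      ((NormedSpace.expSeries ℂ ℂ).compContinuousLinearMap l) 0 ⊤ := by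
  have hexp : HasFPowerSeriesOnBall NormedSpace.exp (NormedSpace.expSeries ℂ ℂ) (l 0) ⊤ := by
    rw [map_zero]
    exact NormedSpace.exp_hasFPowerSeriesOnBall
  simpa [Complex.exp_eq_exp_ℂ, ENNReal.top_div_of_ne_top, Function.comp_def]
    using hexp.compContinuousLinearMap

theorem integrable_mul_exp_sub_exp {c : α → ℂ} {l₁ l₂ : α → E →L[ℂ] ℂ}
    (hc : AEStronglyMeasurable c μ) (hl₁ : AEStronglyMeasurable l₁ μ)
    (hl₂ : AEStronglyMeasurable l₂ μ)
    (hint : ∀ ρ : ℝ, 0 ≤ ρ → Integrable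
      (fun x ↦ ‖c x‖ * (‖l₁ x - l₂ x‖ * Real.exp (ρ * max ‖l₁ x‖ ‖l₂ x‖))) μ) (y : E) :
    Integrable (fun x ↦ c x * (Complex.exp (l₁ x y) - Complex.exp (l₂ x y))) μ := by
  have hexp {l : α → E →L[ℂ] ℂ} (hl : AEStronglyMeasurable l μ) :
      AEStronglyMeasurable (fun x ↦ Complex.exp (l x y)) μ :=
    Complex.continuous_exp.comp_aestronglyMeasurable (hl.apply_continuousLinearMap y)
  refine ((hint (3 * ‖y‖) (by positivity)).const_mul ‖y‖).mono'
    (hc.mul ((hexp hl₁).sub (hexp hl₂))) (.of_forall fun x ↦ ?_)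
  have hmax : max ‖l₁ x y‖ ‖l₂ x y‖ ≤ max ‖l₁ x‖ ‖l₂ x‖ * ‖y‖ := by
    rw [max_mul_of_nonneg _ _ (norm_nonneg y)]
    exact max_le_max ((l₁ x).le_opNorm y) ((l₂ x).le_opNorm y)
  calc ‖c x * (Complex.exp (l₁ x y) - Complex.exp (l₂ x y))‖
      ≤ ‖c x‖ * (‖l₁ x y - l₂ x y‖ * Real.exp (3 * max ‖l₁ x y‖ ‖l₂ x y‖)) := by
        rw [norm_mul]
        gcongr
        exact norm_exp_sub_exp_le _ _
    _ ≤ ‖c x‖ * ((‖l₁ x - l₂ x‖ * ‖y‖) * Real.exp (3 * (max ‖l₁ x‖ ‖l₂ x‖ * ‖y‖))) := by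
        gcongr
        exact (l₁ x - l₂ x).le_opNorm y
    _ = ‖y‖ * (‖c x‖ * (‖l₁ x - l₂ x‖ * Real.exp (3 * ‖y‖ * max ‖l₁ x‖ ‖l₂ x‖))) := by
        rw [mul_assoc 3 ‖y‖, mul_comm ‖y‖ (max _ _)]
        ring

theorem analyticOnNhd_integral_mul_exp_sub_exp {c : α → ℂ} {l₁ l₂ : α → E →L[ℂ] ℂ}
    (hc : AEStronglyMeasurable c μ) (hl₁ : AEStronglyMeasurable l₁ μ)
    (hl₂ : AEStronglyMeasurable l₂ μ)
    (hint : ∀ ρ : ℝ, 0 ≤ ρ → Integrable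
      (fun x ↦ ‖c x‖ * (‖l₁ x - l₂ x‖ * Real.exp (ρ * max ‖l₁ x‖ ‖l₂ x‖))) μ) :
    AnalyticOnNhd ℂ
      (fun y ↦ ∫ x, c x * (Complex.exp (l₁ x y) - Complex.exp (l₂ x y)) ∂μ) univ := by
  let q (l : E →L[ℂ] ℂ) := (NormedSpace.expSeries ℂ ℂ).compContinuousLinearMap l
  have hq (n : ℕ) : Continuous fun l ↦ q l n := continuous_compContinuousLinearMap _ n
  have hexp (x : α) : HasFPowerSeriesOnBall
      (fun y ↦ c x * (Complex.exp (l₁ x y) - Complex.exp (l₂ x y)))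
      (c x • (q (l₁ x) - q (l₂ x))) 0 ⊤ :=
    ((hasFPowerSeriesOnBall_exp_comp (l₁ x)).sub
      (hasFPowerSeriesOnBall_exp_comp (l₂ x))).const_smul (c := c x)
  have hseries : HasFPowerSeriesOnBall
      (fun y ↦ ∫ x, c x * (Complex.exp (l₁ x y) - Complex.exp (l₂ x y)) ∂μ)
      (fun n ↦ ∫ x, (c x • (q (l₁ x) - q (l₂ x))) n ∂μ) 0 ⊤ := by
    refine hasFPowerSeriesOnBall_integral ENNReal.zero_lt_top (fun n ↦ ?_) (fun ρ _ ↦ ?_)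
      (.of_forall hexp)
    · exact hc.smul (((hq n).comp_aestronglyMeasurable hl₁).sub
        ((hq n).comp_aestronglyMeasurable hl₂))
    · refine ⟨_, (hint ρ ρ.2).const_mul ρ, fun n ↦ .of_forall fun x ↦ ?_⟩
      calc ‖c x • (q (l₁ x) n - q (l₂ x) n)‖ * (ρ : ℝ) ^ n
          = ‖c x‖ * (‖q (l₁ x) n - q (l₂ x) n‖ * (ρ : ℝ) ^ n) := by rw [norm_smul, mul_assoc]
        _ ≤ ‖c x‖ * (ρ * ‖l₁ x - l₂ x‖ * Real.exp (ρ * max ‖l₁ x‖ ‖l₂ x‖)) :=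
            mul_le_mul_of_nonneg_left
              (norm_expSeries_comp_sub_mul_pow_le (l₁ x) (l₂ x) ρ.2 n) (norm_nonneg _)
        _ = ρ * (‖c x‖ * (‖l₁ x - l₂ x‖ * Real.exp (ρ * max ‖l₁ x‖ ‖l₂ x‖))) := by ring
  simpa only [Metric.eball_top] using hseries.analyticOnNhd

end ExpIntegral

section InvSubstitution

variable {E : Type*} [NormedAddCommGroup E] [NormedSpace ℝ E]

theorem hasDerivWithinAt_inv_Ioo {a : ℝ} :
    ∀ t ∈ Ioo 0 a, HasDerivWithinAt (fun t : ℝ ↦ t⁻¹) (-(t ^ 2)⁻¹) (Ioo 0 a) t :=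
  fun _ ht ↦ (hasDerivAt_inv ht.1.ne').hasDerivWithinAt

theorem integrableOn_Ioi_inv_iff {a : ℝ} (ha : 0 < a) (f : ℝ → E) :
    IntegrableOn f (Ioi a⁻¹) ↔ IntegrableOn (fun t ↦ (t ^ 2)⁻¹ • f t⁻¹) (Ioo 0 a) := by
  rw [← inv_Ioo_0_left ha, ← image_inv_eq_inv,
    integrableOn_image_iff_integrableOn_abs_deriv_smul measurableSet_Ioo
      hasDerivWithinAt_inv_Ioo inv_injective.injOn]
  simp only [abs_neg, abs_inv, abs_sq]

theorem integral_Ioi_inv {a : ℝ} (ha : 0 < a) (f : ℝ → E) :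
    ∫ t in Ioi a⁻¹, f t = ∫ t in Ioo 0 a, (t ^ 2)⁻¹ • f t⁻¹ := by
  rw [← inv_Ioo_0_left ha, ← image_inv_eq_inv,
    integral_image_eq_integral_abs_deriv_smul measurableSet_Ioo
      hasDerivWithinAt_inv_Ioo inv_injective.injOn]
  simp only [abs_neg, abs_inv, abs_sq]

theorem integral_Ioi_zero_eq_add_comp_inv {f : ℝ → E} (hf : IntegrableOn f (Ioo 0 1))
    (hf_inv : IntegrableOn (fun t ↦ (t ^ 2)⁻¹ • f t⁻¹) (Ioo 0 1)) :
    ∫ t in Ioi 0, f t = (∫ t in Ioo 0 1, f t) + ∫ t in Ioo 0 1, (t ^ 2)⁻¹ • f t⁻¹ := by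
  have hf' : IntegrableOn f (Ioi 1) := by
    simpa only [inv_one] using (integrableOn_Ioi_inv_iff one_pos f).mpr hf_inv
  rw [← integrableOn_Ioc_iff_integrableOn_Ioo] at hf
  rw [← Ioc_union_Ioi_eq_Ioi zero_le_one, setIntegral_union (Ioc_disjoint_Ioi le_rfl)
    measurableSet_Ioi hf hf', integral_Ioc_eq_integral_Ioo, ← integral_Ioi_inv one_pos f, inv_one]

end InvSubstitution

theorem integral_Ioo_zero_one_cpow {s : ℂ} (hs : s.re < 0) :
    ∫ t in Ioo (0 : ℝ) 1, (t : ℂ) ^ (-s - 1) = -1 / s := by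
  have hre : -1 < (-s - 1).re := by simpa using hs
  have hs₀ : s ≠ 0 := by rintro rfl; simp at hs
  rw [← integral_Ioc_eq_integral_Ioo, ← intervalIntegral.integral_of_le zero_le_one,
    integral_cpow (.inl hre), sub_add_cancel, Complex.ofReal_one, Complex.ofReal_zero,
    Complex.one_cpow, Complex.zero_cpow (neg_ne_zero.mpr hs₀), sub_zero, div_neg, neg_div]

theorem cpow_eq_exp_mul_log {x : ℝ} (hx : 0 < x) (s : ℂ) :
    (x : ℂ) ^ s = Complex.exp (s * Real.log x) := by
  rw [Complex.cpow_def_of_ne_zero (by exact_mod_cast hx.ne'), Complex.ofReal_log hx.le, mul_comm]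

theorem rpow_le_factorial_ceil_mul_exp {x : ℝ} (hx : 1 ≤ x) (R : ℝ) :
    x ^ R ≤ ⌈R⌉₊.factorial * Real.exp x :=
  calc x ^ R ≤ x ^ (⌈R⌉₊ : ℝ) := Real.rpow_le_rpow_of_exponent_le hx (Nat.le_ceil R)
    _ = x ^ ⌈R⌉₊ := Real.rpow_natCast x _
    _ ≤ ⌈R⌉₊.factorial * Real.exp x := by
      have := Real.pow_div_factorial_le_exp x (zero_le_one.trans hx) ⌈R⌉₊
      rwa [div_le_iff₀' (by positivity)] at this

section Theta

theorem ofReal_theta (x : ℝ) : (theta x : ℂ) = jacobiTheta (Complex.I * x) := by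
  simp only [theta, jacobiTheta, Complex.ofReal_tsum]
  congr! 2 with n
  push_cast
  congr 1
  linear_combination (-(Real.pi : ℂ) * n ^ 2 * x) * Complex.I_sq

theorem hasSum_theta {x : ℝ} (hx : 0 < x) :
    HasSum (fun n : ℤ ↦ Real.exp (-Real.pi * (n : ℝ) ^ 2 * x)) (theta x) := by
  have := HurwitzZeta.hasSum_int_evenKernel 0 hx
  simp only [add_zero] at this
  exact this.summable.hasSum

theorem one_le_theta {x : ℝ} (hx : 0 < x) : 1 ≤ theta x := by
  simpa using le_hasSum (hasSum_theta hx) 0 fun n _ ↦ (Real.exp_pos _).le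

theorem theta_pos {x : ℝ} (hx : 0 < x) : 0 < theta x :=
  one_pos.trans_le (one_le_theta hx)

theorem continuousOn_theta : ContinuousOn theta (Ioi 0) := by
  intro x hx
  have hτ : 0 < (Complex.I * x).im := by simpa using hx
  have hcont : ContinuousAt (fun x : ℝ ↦ jacobiTheta (Complex.I * x)) x :=
    (differentiableAt_jacobiTheta hτ).continuousAt.comp (f := fun x : ℝ ↦ Complex.I * (x : ℂ))
      (by fun_prop)
  simp only [← ofReal_theta] at hcont
  exact (Complex.continuous_re.continuousAt.comp hcont).continuousWithinAt

theorem theta_sub_one_le {x : ℝ} (hx : 1 ≤ x) :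
    theta x - 1 ≤ 3 * Real.exp (-Real.pi * x) := by
  have hx₀ : 0 < x := one_pos.trans_le hx
  have hbound := norm_jacobiTheta_sub_one_le (τ := Complex.I * x) (by simpa using hx₀)
  have him : (Complex.I * x).im = x := by simp
  rw [← ofReal_theta, him, ← Complex.ofReal_one, ← Complex.ofReal_sub, Complex.norm_real] at hbound
  have hexp : Real.exp (-Real.pi * x) ≤ 1 / 3 := by
    rw [neg_mul, Real.exp_neg, one_div]
    refine inv_anti₀ three_pos ?_
    nlinarith [Real.add_one_le_exp (Real.pi * x), Real.pi_gt_three]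
  refine (le_abs_self _).trans (hbound.trans ?_)
  gcongr
  rw [div_le_iff₀ (by linarith)]
  linarith

theorem theta_sq {t : ℝ} (ht : 0 < t) : theta (t ^ 2) = t⁻¹ * theta (1 / t ^ 2) := by
  have h := Real.tsum_exp_neg_mul_int_sq (a := t ^ 2) (by positivity)
  rw [← Real.sqrt_eq_rpow, Real.sqrt_sq ht.le, one_div] at h
  simpa only [theta, mul_right_comm, mul_one_div, mul_div_right_comm] using h

end Theta

section LogTheta

/-- `log θ(1/t²)`, so that `θ(1/t²)^w = exp (w * logTheta t)`. -/
noncomputable def logTheta (t : ℝ) : ℝ := Real.log (theta (1 / t ^ 2))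

theorem cpow_theta_one_div_sq (w : ℂ) {t : ℝ} (ht : 0 < t) :
    (theta (1 / t ^ 2) : ℂ) ^ w = Complex.exp (w * logTheta t) :=
  cpow_eq_exp_mul_log (theta_pos (by positivity)) w

theorem logTheta_nonneg {t : ℝ} (ht : 0 < t) : 0 ≤ logTheta t :=
  Real.log_nonneg (one_le_theta (by positivity))

theorem continuousOn_logTheta : ContinuousOn logTheta (Ioi 0) := by
  have hmaps : MapsTo (fun t : ℝ ↦ 1 / t ^ 2) (Ioi 0) (Ioi 0) := fun t (ht : 0 < t) ↦ by
    simp only [mem_Ioi]; positivity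
  have hdiv : ContinuousOn (fun t : ℝ ↦ 1 / t ^ 2) (Ioi 0) :=
    continuousOn_const.div (by fun_prop) fun t (ht : 0 < t) ↦ by positivity
  exact (continuousOn_theta.comp hdiv hmaps).log fun t ht ↦ (theta_pos (hmaps ht)).ne'

theorem logTheta_le {t : ℝ} (ht : t ∈ Ioo 0 1) :
    logTheta t ≤ 3 * Real.exp (-Real.pi * (1 / t ^ 2)) := by
  have hinv : 1 ≤ 1 / t ^ 2 := one_le_one_div (pow_pos ht.1 2) (pow_le_one₀ ht.1.le ht.2.le)
  exact (Real.log_le_sub_one_of_pos (theta_pos (by positivity))).trans (theta_sub_one_le hinv)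

theorem exp_mul_abs_log_le {t : ℝ} (ht : t ∈ Ioo 0 1) (R : ℝ) :
    Real.exp (R * |Real.log t|) ≤ ⌈R / 2⌉₊.factorial * Real.exp (1 / t ^ 2) := by
  have hinv : 1 ≤ 1 / t ^ 2 := one_le_one_div (pow_pos ht.1 2) (pow_le_one₀ ht.1.le ht.2.le)
  have hlog : Real.log (1 / t ^ 2) * (R / 2) = R * |Real.log t| := by
    rw [abs_of_neg (Real.log_neg ht.1 ht.2), one_div, Real.log_inv, Real.log_pow]
    push_cast
    ring
  rw [← hlog, ← Real.rpow_def_of_pos (by positivity)]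
  exact rpow_le_factorial_ceil_mul_exp hinv (R / 2)

theorem exists_logTheta_div_mul_exp_le {R : ℝ} (hR : 0 ≤ R) :
    ∃ M, ∀ t ∈ Ioo 0 1,
      t⁻¹ * (logTheta t * Real.exp (R * (logTheta t + |Real.log t|))) ≤ M := by
  set N : ℝ := (⌈(R + 1) / 2⌉₊.factorial : ℝ)
  refine ⟨3 * Real.exp (3 * R) * N, fun t ht ↦ ?_⟩
  set x := 1 / t ^ 2
  have hx : 0 < x := one_div_pos.mpr (pow_pos ht.1 2)
  have hexp : Real.exp (-Real.pi * x) * Real.exp x ≤ 1 := by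
    rw [← Real.exp_add, Real.exp_le_one_iff]
    nlinarith [Real.pi_gt_three]
  have hlog : logTheta t ≤ 3 := (logTheta_le ht).trans <| by
    have : Real.exp (-Real.pi * x) ≤ 1 := Real.exp_le_one_iff.mpr (by nlinarith [Real.pi_pos])
    linarith
  have hinv : t⁻¹ = Real.exp |Real.log t| := by
    rw [abs_of_neg (Real.log_neg ht.1 ht.2), Real.exp_neg, Real.exp_log ht.1]
  calc t⁻¹ * (logTheta t * Real.exp (R * (logTheta t + |Real.log t|)))
      = logTheta t * Real.exp (R * logTheta t) * Real.exp ((R + 1) * |Real.log t|) := by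
        rw [hinv, mul_add, Real.exp_add, add_mul, Real.exp_add, one_mul]
        ring
    _ ≤ 3 * Real.exp (-Real.pi * x) * Real.exp (R * 3) * (N * Real.exp x) := by
        gcongr
        · exact logTheta_le ht
        · exact exp_mul_abs_log_le ht (R + 1)
    _ = 3 * Real.exp (3 * R) * N * (Real.exp (-Real.pi * x) * Real.exp x) := by
        rw [mul_comm R 3]
        ring
    _ ≤ 3 * Real.exp (3 * R) * N := mul_le_of_le_one_right (by positivity) hexp

theorem integrableOn_logTheta_div_mul_exp {R : ℝ} (hR : 0 ≤ R) :
    IntegrableOn (fun t ↦ t⁻¹ * (logTheta t * Real.exp (R * (logTheta t + |Real.log t|))))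
      (Ioo 0 1) := by
  obtain ⟨M, hM⟩ := exists_logTheta_div_mul_exp_le hR
  have hcont : ContinuousOn
      (fun t ↦ t⁻¹ * (logTheta t * Real.exp (R * (logTheta t + |Real.log t|)))) (Ioo 0 1) := by
    have hL : ContinuousOn logTheta (Ioo 0 1) := continuousOn_logTheta.mono Ioo_subset_Ioi_self
    have hlog : ContinuousOn Real.log (Ioo 0 1) :=
      Real.continuousOn_log.mono fun t ht ↦ ht.1.ne'
    have hinv : ContinuousOn (fun t : ℝ ↦ t⁻¹) (Ioo 0 1) :=
      continuousOn_inv₀.mono fun t ht ↦ ht.1.ne'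
    fun_prop
  refine IntegrableOn.of_bound measure_Ioo_lt_top
    (hcont.aestronglyMeasurable measurableSet_Ioo) M ?_
  filter_upwards [ae_restrict_mem measurableSet_Ioo] with t ht
  have hL₀ := logTheta_nonneg ht.1
  have ht₀ := ht.1
  rw [Real.norm_of_nonneg (by positivity)]
  exact hM t ht

end LogTheta

section IncompleteMellin

/-- The integrand of the Mellin transform of `θ(1/t²)^w - 1` at `-s`. -/
noncomputable def mellinIntegrand (w s : ℂ) (t : ℝ) : ℂ :=
  ((theta (1 / t ^ 2) : ℂ) ^ w - 1) * (t : ℂ) ^ (-s) / t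

/-- The Mellin transform of `θ(1/t²)^w - 1` at `-s`, truncated to `0 < t < 1`; the integral
`G w s` is the sum of its values at `s` and `w - s`. -/
noncomputable def incompleteMellin (w s : ℂ) : ℂ := ∫ t in Ioo (0 : ℝ) 1, mellinIntegrand w s t

/-- The linear functional `(w, s) ↦ a w + b s` on `ℂ²`. -/
noncomputable def linearForm (a b : ℝ) : ℂ × ℂ →L[ℂ] ℂ :=
  (a : ℂ) • ContinuousLinearMap.fst ℂ ℂ ℂ + (b : ℂ) • ContinuousLinearMap.snd ℂ ℂ ℂ

theorem norm_linearForm_le (a b : ℝ) : ‖linearForm a b‖ ≤ |a| + |b| := by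
  refine (norm_add_le _ _).trans (add_le_add ?_ ?_) <;>
    rw [norm_smul, Complex.norm_real, Real.norm_eq_abs]
  · exact mul_le_of_le_one_right (abs_nonneg a) (ContinuousLinearMap.norm_fst_le ℂ ℂ ℂ)
  · exact mul_le_of_le_one_right (abs_nonneg b) (ContinuousLinearMap.norm_snd_le ℂ ℂ ℂ)

theorem linearForm_sub_linearForm (a a' b : ℝ) :
    linearForm a b - linearForm a' b = linearForm (a - a') 0 := by
  ext <;> simp [linearForm]

theorem aestronglyMeasurable_linearForm {a b : ℝ → ℝ} {μ : Measure ℝ}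
    (ha : AEStronglyMeasurable a μ) (hb : AEStronglyMeasurable b μ) :
    AEStronglyMeasurable (fun t ↦ linearForm (a t) (b t)) μ :=
  ((Complex.continuous_ofReal.comp_aestronglyMeasurable ha).smul_const _).add
    ((Complex.continuous_ofReal.comp_aestronglyMeasurable hb).smul_const _)

theorem aestronglyMeasurable_linearForm_neg_log {a : ℝ → ℝ} (ha : ContinuousOn a (Ioo 0 1)) :
    AEStronglyMeasurable (fun t ↦ linearForm (a t) (-Real.log t)) (volume.restrict (Ioo 0 1)) :=
  aestronglyMeasurable_linearForm (ha.aestronglyMeasurable measurableSet_Ioo)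
    Real.measurable_log.neg.aestronglyMeasurable

theorem mellinIntegrand_eq_mul_exp_sub_exp (w s : ℂ) {t : ℝ} (ht : 0 < t) :
    mellinIntegrand w s t = (t : ℂ)⁻¹ *
      (Complex.exp (linearForm (logTheta t) (-Real.log t) (w, s))
        - Complex.exp (linearForm 0 (-Real.log t) (w, s))) := by
  simp only [mellinIntegrand, linearForm, add_apply,
    smul_apply, ContinuousLinearMap.coe_fst', ContinuousLinearMap.coe_snd',
    smul_eq_mul, Complex.ofReal_neg, Complex.ofReal_zero, zero_mul, zero_add, Complex.exp_add,
    cpow_theta_one_div_sq w ht, cpow_eq_exp_mul_log ht, mul_comm w, neg_mul, mul_comm s]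
  ring

theorem integrableOn_norm_linearForm_sub_mul_exp {ρ : ℝ} (hρ : 0 ≤ ρ) :
    IntegrableOn (fun t : ℝ ↦ ‖(t : ℂ)⁻¹‖ *
      (‖linearForm (logTheta t) (-Real.log t) - linearForm 0 (-Real.log t)‖ * Real.exp
        (ρ * max ‖linearForm (logTheta t) (-Real.log t)‖ ‖linearForm 0 (-Real.log t)‖)))
      (Ioo 0 1) := by
  have hl₁ := aestronglyMeasurable_linearForm_neg_log
    (continuousOn_logTheta.mono Ioo_subset_Ioi_self)
  have hl₂ := aestronglyMeasurable_linearForm_neg_log (continuousOn_const (c := 0))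
  refine (integrableOn_logTheta_div_mul_exp hρ).mono'
    (Complex.measurable_ofReal.inv.aestronglyMeasurable.norm.mul
      ((hl₁.sub hl₂).norm.mul (Real.continuous_exp.comp_aestronglyMeasurable
        ((hl₁.norm.sup hl₂.norm).const_mul ρ)))) ?_
  filter_upwards [ae_restrict_mem measurableSet_Ioo] with t ht
  have hL₀ := logTheta_nonneg ht.1
  have hdiff : ‖linearForm (logTheta t) 0‖ ≤ logTheta t := by
    simpa [abs_of_nonneg hL₀] using norm_linearForm_le (logTheta t) 0
  have hmax : max ‖linearForm (logTheta t) (-Real.log t)‖ ‖linearForm 0 (-Real.log t)‖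
      ≤ logTheta t + |Real.log t| := by
    refine max_le ?_ ((norm_linearForm_le _ _).trans ?_)
    · simpa [abs_of_nonneg hL₀] using norm_linearForm_le (logTheta t) (-Real.log t)
    · simpa using hL₀
  rw [Real.norm_of_nonneg (by positivity), linearForm_sub_linearForm, sub_zero, norm_inv,
    Complex.norm_real, Real.norm_of_nonneg ht.1.le]
  gcongr
  exact inv_nonneg.mpr ht.1.le

theorem integrableOn_mellinIntegrand (w s : ℂ) :
    IntegrableOn (mellinIntegrand w s) (Ioo 0 1) := by
  refine IntegrableOn.congr_fun ?_
    (fun t ht ↦ (mellinIntegrand_eq_mul_exp_sub_exp w s ht.1).symm) measurableSet_Ioo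
  exact integrable_mul_exp_sub_exp Complex.measurable_ofReal.inv.aestronglyMeasurable
    (aestronglyMeasurable_linearForm_neg_log (continuousOn_logTheta.mono Ioo_subset_Ioi_self))
    (aestronglyMeasurable_linearForm_neg_log continuousOn_const)
    (fun _ ↦ integrableOn_norm_linearForm_sub_mul_exp) (w, s)

theorem analyticOnNhd_incompleteMellin :
    AnalyticOnNhd ℂ (fun p : ℂ × ℂ ↦ incompleteMellin p.1 p.2) univ := by
  have heq (p : ℂ × ℂ) : incompleteMellin p.1 p.2 = ∫ t in Ioo (0 : ℝ) 1,
      (t : ℂ)⁻¹ * (Complex.exp (linearForm (logTheta t) (-Real.log t) p)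
        - Complex.exp (linearForm 0 (-Real.log t) p)) :=
    setIntegral_congr_fun measurableSet_Ioo fun t ht ↦
      mellinIntegrand_eq_mul_exp_sub_exp p.1 p.2 ht.1
  simp only [heq]
  exact analyticOnNhd_integral_mul_exp_sub_exp Complex.measurable_ofReal.inv.aestronglyMeasurable
    (aestronglyMeasurable_linearForm_neg_log (continuousOn_logTheta.mono Ioo_subset_Ioi_self))
    (aestronglyMeasurable_linearForm_neg_log continuousOn_const)
    fun _ ↦ integrableOn_norm_linearForm_sub_mul_exp

theorem G_eq_incompleteMellin_add (w s : ℂ) :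
    G w s = incompleteMellin w s + incompleteMellin w (w - s) := by
  rw [incompleteMellin, incompleteMellin, ← integral_add (integrableOn_mellinIntegrand w s)
    (integrableOn_mellinIntegrand w (w - s))]
  simp only [G, mellinIntegrand, mul_add, add_div]

theorem G_sub (w s : ℂ) : G w (w - s) = G w s := by
  rw [G_eq_incompleteMellin_add, G_eq_incompleteMellin_add, sub_sub_cancel, add_comm]

theorem analyticOnNhd_G : AnalyticOnNhd ℂ (fun p : ℂ × ℂ ↦ G p.1 p.2) univ := by
  simp only [G_eq_incompleteMellin_add]
  have hswap : AnalyticOnNhd ℂ (fun p : ℂ × ℂ ↦ (p.1, p.1 - p.2)) univ :=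
    analyticOnNhd_fst.prod (analyticOnNhd_fst.sub analyticOnNhd_snd)
  exact analyticOnNhd_incompleteMellin.add
    (analyticOnNhd_incompleteMellin.comp hswap (mapsTo_univ _ _))

end IncompleteMellin

section ZIntegrand

/-- The integrand of the two-variable zeta function `Z_ℚ(w, s)`. -/
noncomputable def zIntegrand (w s : ℂ) (t : ℝ) : ℂ :=
  (theta (t ^ 2) : ℂ) ^ s * (theta (1 / t ^ 2) : ℂ) ^ (w - s) / t

theorem zIntegrand_eq_mellinIntegrand_add (w s : ℂ) {t : ℝ} (ht : 0 < t) :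
    zIntegrand w s t = mellinIntegrand w s t + (t : ℂ) ^ (-s - 1) := by
  have ht₀ : (t : ℂ) ≠ 0 := by exact_mod_cast ht.ne'
  have hθ : 0 < theta (1 / t ^ 2) := theta_pos (by positivity)
  have hθ₀ : (theta (1 / t ^ 2) : ℂ) ≠ 0 := by exact_mod_cast hθ.ne'
  have hfe : (theta (t ^ 2) : ℂ) ^ s = (t : ℂ) ^ (-s) * (theta (1 / t ^ 2) : ℂ) ^ s := by
    rw [theta_sq ht, Complex.ofReal_mul, Complex.mul_cpow_ofReal_nonneg (by positivity) hθ.le,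
      cpow_eq_exp_mul_log (inv_pos.mpr ht), cpow_eq_exp_mul_log ht, Real.log_inv,
      Complex.ofReal_neg, mul_neg, neg_mul]
  calc zIntegrand w s t
      = (t : ℂ) ^ (-s) * ((theta (1 / t ^ 2) : ℂ) ^ s * (theta (1 / t ^ 2) : ℂ) ^ (w - s)) / t := by
        rw [zIntegrand, hfe, mul_assoc]
    _ = (t : ℂ) ^ (-s) * (theta (1 / t ^ 2) : ℂ) ^ w / t := by
        rw [← Complex.cpow_add _ _ hθ₀, add_sub_cancel]
    _ = mellinIntegrand w s t + (t : ℂ) ^ (-s - 1) := by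
        rw [mellinIntegrand, Complex.cpow_sub _ _ ht₀, Complex.cpow_one]
        ring

theorem smul_zIntegrand_inv (w s : ℂ) {t : ℝ} (ht : 0 < t) :
    (t ^ 2)⁻¹ • zIntegrand w s t⁻¹ = zIntegrand w (w - s) t := by
  have ht₀ : (t : ℂ) ≠ 0 := by exact_mod_cast ht.ne'
  simp only [zIntegrand, inv_pow, one_div, inv_inv, sub_sub_cancel, Complex.real_smul]
  push_cast
  field_simp

variable {w s : ℂ}

theorem integrableOn_cpow_neg_sub_one (hs : s.re < 0) :
    IntegrableOn (fun t : ℝ ↦ (t : ℂ) ^ (-s - 1)) (Ioo 0 1) :=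
  (intervalIntegral.integrableOn_Ioo_cpow_iff one_pos).mpr (by simpa using hs)

theorem integrableOn_zIntegrand_Ioo (w : ℂ) (hs : s.re < 0) :
    IntegrableOn (zIntegrand w s) (Ioo 0 1) :=
  ((integrableOn_mellinIntegrand w s).add (integrableOn_cpow_neg_sub_one hs)).congr_fun
    (fun _ ht ↦ (zIntegrand_eq_mellinIntegrand_add w s ht.1).symm) measurableSet_Ioo

theorem integral_zIntegrand_Ioo (w : ℂ) (hs : s.re < 0) :
    ∫ t in Ioo (0 : ℝ) 1, zIntegrand w s t = incompleteMellin w s + -1 / s := by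
  rw [setIntegral_congr_fun measurableSet_Ioo fun t ht ↦
      zIntegrand_eq_mellinIntegrand_add w s ht.1,
    integral_add (integrableOn_mellinIntegrand w s) (integrableOn_cpow_neg_sub_one hs),
    integral_Ioo_zero_one_cpow hs, incompleteMellin]

theorem integral_zIntegrand (hws : w.re < s.re) (hs : s.re < 0) :
    ∫ t in Ioi (0 : ℝ), zIntegrand w s t = -1 / s + 1 / (s - w) + G w s := by
  have hws' : (w - s).re < 0 := by simpa using hws
  have hinv : EqOn (fun t : ℝ ↦ (t ^ 2)⁻¹ • zIntegrand w s t⁻¹) (zIntegrand w (w - s)) (Ioo 0 1) :=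
    fun t ht ↦ smul_zIntegrand_inv w s ht.1
  rw [integral_Ioi_zero_eq_add_comp_inv (integrableOn_zIntegrand_Ioo w hs)
      ((integrableOn_zIntegrand_Ioo w hws').congr_fun hinv.symm measurableSet_Ioo),
    setIntegral_congr_fun measurableSet_Ioo hinv, integral_zIntegrand_Ioo w hs,
    integral_zIntegrand_Ioo w hws', G_eq_incompleteMellin_add, ← neg_sub s w, neg_div_neg_eq]
  ring

end ZIntegrand

/-- the integral `G` is entire on `ℂ²`; for `Re(w) < Re(s) < 0` the original
integral equals `-1/s + 1/(s-w) + G(w,s)`; and this meromorphic expression is invariant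
under `s ↦ w - s` whenever `s ≠ 0` and `s ≠ w`. -/
theorem Z_meromorphic_continuation :
    AnalyticOn ℂ (fun p : ℂ × ℂ => G p.1 p.2) Set.univ ∧
    (∀ w s : ℂ, w.re < s.re → s.re < 0 →
      (∫ t in Set.Ioi (0:ℝ), ((theta (t^2) : ℂ)) ^ s * ((theta (1/t^2) : ℂ)) ^ (w - s) / t)
        = -1/s + 1/(s - w) + G w s) ∧
    (∀ w s : ℂ, s ≠ 0 → s ≠ w →
      -1/s + 1/(s - w) + G w s
        = -1/(w - s) + 1/((w - s) - w) + G w (w - s)) := by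
  refine ⟨analyticOnNhd_G.analyticOn, fun w s ↦ integral_zIntegrand, fun w s _ _ ↦ ?_⟩
  rw [G_sub, ← neg_sub s w, neg_div_neg_eq, neg_sub, sub_sub_cancel_left, div_neg, neg_div]
  ring
end

section
/- For each integer m ≥ 1, the polynomial c_m*(w) := (-1)^m m! c_m(-w) has nonnegative integer coefficients, leading term 2^m w^m, and zero constant term, where c_m(w) are the Fourier coefficients of θ^w. -/
/-- The "binomial coefficient" polynomial `C(w, j) = w(w-1)⋯(w-j+1)/j!` in `ℚ[w]`. -/
noncomputable def binomPoly (j : ℕ) : Polynomial ℚ :=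
  Polynomial.C ((j.factorial : ℚ)⁻¹) * ∏ i ∈ Finset.range j, (Polynomial.X - Polynomial.C (i : ℚ))

/-- `repCount j m` is the number of `j`-tuples of positive integers whose squares sum to `m`. -/
def repCount (j m : ℕ) : ℕ :=
  (Finset.univ.filter (fun f : Fin j → Fin (m + 1) =>
    (∀ i, 1 ≤ (f i).1) ∧ ∑ i, ((f i).1)^2 = m)).card

/-- `thetaCoeff m = c_m(w)`, the `m`-th Fourier coefficient of `θ^w`, defined via the
binomial expansion `ϑ(q)^w = 1 + ∑_{j≥1} C(w,j) 2^j (∑_{n≥1} q^{n²})^j`. -/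
noncomputable def thetaCoeff (m : ℕ) : Polynomial ℚ :=
  ∑ j ∈ Finset.Icc 1 m, ((2:ℚ)^j * (repCount j m : ℚ)) • binomPoly j

/-- `c_m^*(w) := (-1)^m m! c_m(-w)`. -/
noncomputable def thetaCoeffStar (m : ℕ) : Polynomial ℚ :=
  Polynomial.C ((-1)^m * (m.factorial : ℚ)) * (thetaCoeff m).comp (-Polynomial.X)

/-!
If `f(0) = 1` and `D` is minus the logarithmic derivative of `f`, then `f^{-w}` has derivative
`w D f^{-w}`, so the polynomials `P_m(w)` in `f^{-w} = ∑ P_m(w) q^m / m!` satisfy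
`P_{m+1} = w ∑_{i+j=m} (m!/j!) D_i P_j`. If the `D_i` are natural numbers, so are all
coefficients of `P_m`, and the leading term of `P_m` is `D_0^m w^m` (when `D_0 ≠ 0`).

For `f = ϑ(-q)` we have `P_m = c_m^*`, and Gauss's product `ϑ(-q) = ∏_{k ≥ 1} (1-q^k)/(1+q^k)` gives
`D = ∑_k 2k q^{k-1}/(1-q^{2k})`. Only congruences modulo `q^n` are needed; they are read off the
finite form of Gauss's identity due to Shanks,
`∑_{s<n} (-1)^s (P(s)+P(s+1)) q^{sn} = 1 + 2 ∑_{0<s<n} (-1)^s q^{s²}` with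
`P(s) = ∏_{s≤k<n} (1-q^k)/(1+q^k)`, where all summands on the left but `s = 0` are `O(q^n)`.
-/

namespace ThetaPower

section NegLogDeriv

open PowerSeries

variable {K : Type*} [Field K]

/-- The negated logarithmic derivative; it is `0` if `f` has zero constant term, since then
`f⁻¹ = 0` by convention. -/
noncomputable def negLogDeriv (f : K⟦X⟧) : K⟦X⟧ := -(derivative K f * f⁻¹)

lemma derivative_eq_neg_mul_negLogDeriv {f : K⟦X⟧} (hf : constantCoeff f ≠ 0) :
    derivative K f = -(f * negLogDeriv f) := by
  rw [negLogDeriv]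
  linear_combination -derivative K f * PowerSeries.mul_inv_cancel f hf

lemma derivative_pow_eq_neg_mul_negLogDeriv {f : K⟦X⟧} (hf : constantCoeff f ≠ 0) (N : ℕ) :
    derivative K (f ^ N) = -(N * (negLogDeriv f * f ^ N)) := by
  rw [derivative_pow, derivative_eq_neg_mul_negLogDeriv hf]
  cases N with
  | zero => simp
  | succ N => rw [Nat.add_sub_cancel]; ring

lemma constantCoeff_negLogDeriv {f : K⟦X⟧} (hf : constantCoeff f = 1) :
    constantCoeff (negLogDeriv f) = -coeff 1 f := by
  simp [negLogDeriv, ← coeff_zero_eq_constantCoeff_apply (derivative K f), coeff_derivative, hf]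

lemma negLogDeriv_one : negLogDeriv (1 : K⟦X⟧) = 0 := by
  simp [negLogDeriv]

lemma negLogDeriv_mul {f g : K⟦X⟧} (hf : constantCoeff f ≠ 0) (hg : constantCoeff g ≠ 0) :
    negLogDeriv (f * g) = negLogDeriv f + negLogDeriv g := by
  simp only [negLogDeriv, Derivation.leibniz, smul_eq_mul, PowerSeries.mul_inv_rev]
  linear_combination
    -derivative K g * g⁻¹ * PowerSeries.mul_inv_cancel f hf
      - derivative K f * f⁻¹ * PowerSeries.mul_inv_cancel g hg

lemma negLogDeriv_prod {ι : Type*} (s : Finset ι) (f : ι → K⟦X⟧)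
    (hf : ∀ i ∈ s, constantCoeff (f i) ≠ 0) :
    negLogDeriv (∏ i ∈ s, f i) = ∑ i ∈ s, negLogDeriv (f i) := by
  classical
  induction s using Finset.induction_on with
  | empty => simp [negLogDeriv_one]
  | insert i s hi ih =>
    rw [Finset.forall_mem_insert] at hf
    rw [Finset.prod_insert hi, Finset.sum_insert hi, negLogDeriv_mul hf.1, ih hf.2]
    rw [map_prod]
    exact Finset.prod_ne_zero_iff.2 hf.2

lemma negLogDeriv_inv {f : K⟦X⟧} (hf : constantCoeff f ≠ 0) :
    negLogDeriv f⁻¹ = -negLogDeriv f := by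
  have hinv : constantCoeff f⁻¹ ≠ 0 := by simpa using hf
  have h := negLogDeriv_mul hf hinv
  rw [PowerSeries.mul_inv_cancel f hf, negLogDeriv_one] at h
  exact (neg_eq_of_add_eq_zero_right h.symm).symm

lemma X_pow_dvd_negLogDeriv_sub {f g : K⟦X⟧} {n : ℕ} (hf : constantCoeff f ≠ 0)
    (hg : constantCoeff g ≠ 0) (hfg : X ^ (n + 1) ∣ f - g) :
    X ^ n ∣ negLogDeriv f - negLogDeriv g := by
  have hderiv : X ^ n ∣ derivative K (f - g) := by
    rw [X_pow_dvd_iff] at hfg ⊢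
    intro m hm
    rw [coeff_derivative, hfg (m + 1) (by omega), zero_mul]
  have hsub : negLogDeriv f - negLogDeriv g
      = -(derivative K (f - g) * f⁻¹) + (f - g) * (derivative K g * f⁻¹ * g⁻¹) := by
    rw [negLogDeriv, negLogDeriv, map_sub]
    linear_combination derivative K g * f⁻¹ * PowerSeries.mul_inv_cancel g hg
      - derivative K g * g⁻¹ * PowerSeries.mul_inv_cancel f hf
  rw [hsub]
  exact dvd_add (hderiv.mul_right _).neg_right
    (((pow_dvd_pow X n.le_succ).trans hfg).mul_right _)

end NegLogDeriv

section NatSeries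

open PowerSeries

/-- The subsemiring of power series whose coefficients are natural numbers. -/
noncomputable def natSeries (R : Type*) [Semiring R] : Subsemiring R⟦X⟧ :=
  (PowerSeries.map (Nat.castRingHom R)).rangeS

lemma coeff_mem_range_of_mem_natSeries {R : Type*} [Semiring R] {f : R⟦X⟧} (hf : f ∈ natSeries R)
    (n : ℕ) : coeff n f ∈ Set.range (Nat.castRingHom R) := by
  obtain ⟨g, rfl⟩ := hf
  exact ⟨coeff n g, (coeff_map _ n g).symm⟩

lemma X_mem_natSeries (R : Type*) [Semiring R] : (X : R⟦X⟧) ∈ natSeries R :=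
  ⟨X, map_X _⟩

lemma inv_one_sub_X_pow_mem_natSeries (K : Type*) [Field K] {k : ℕ} (hk : k ≠ 0) :
    ((1 - X ^ k)⁻¹ : K⟦X⟧) ∈ natSeries K := by
  have hgeom : (1 - X ^ k)⁻¹ = expand k hk (mk 1 : K⟦X⟧) := by
    rw [PowerSeries.inv_eq_iff_mul_eq_one (by simp [hk])]
    simpa using congrArg (expand k hk) (mk_one_mul_one_sub_eq_one K)
  refine ⟨mk fun n => if k ∣ n then 1 else 0, ?_⟩
  ext n
  simp [hgeom, coeff_expand]

end NatSeries

section PowerCoefficients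

open Polynomial
open Finset.HasAntidiagonal (antidiagonal mem_antidiagonal)

lemma binomPoly_eval_natCast (j N : ℕ) : (binomPoly j).eval (N : ℚ) = N.choose j := by
  have hprod : ∏ i ∈ Finset.range j, ((N : ℚ) - i) = N.descFactorial j := by
    rw [← descPochhammer_eval_eq_descFactorial ℚ N j, descPochhammer_eval_eq_prod_range]
  have hj : (j.factorial : ℚ) ≠ 0 := mod_cast j.factorial_ne_zero
  simp only [binomPoly, eval_mul, eval_prod, eval_C, eval_sub, eval_X]
  rw [hprod, Nat.descFactorial_eq_factorial_mul_choose, Nat.cast_mul, inv_mul_cancel_left₀ hj]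

/-- For `f` with constant term `1`, the coefficient of `q^m` in `f(q)^w = ∑ⱼ C(w, j) (f(q) - 1)^j`,
as a polynomial in `w`; terms with `j > m` do not contribute. -/
noncomputable def powCoeff (f : PowerSeries ℚ) (m : ℕ) : ℚ[X] :=
  ∑ j ∈ Finset.range (m + 1), PowerSeries.coeff m ((f - 1) ^ j) • binomPoly j

variable {f : PowerSeries ℚ}

lemma powCoeff_zero (f : PowerSeries ℚ) : powCoeff f 0 = 1 := by
  simp [powCoeff, binomPoly]

lemma powCoeff_rescale (a : ℚ) (f : PowerSeries ℚ) (m : ℕ) :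
    powCoeff (PowerSeries.rescale a f) m = C (a ^ m) * powCoeff f m := by
  have hpow (j : ℕ) :
      (PowerSeries.rescale a f - 1) ^ j = PowerSeries.rescale a ((f - 1) ^ j) := by simp
  simp only [powCoeff, hpow, PowerSeries.coeff_rescale, mul_smul, Finset.mul_sum, ← smul_eq_C_mul]

lemma coeff_sub_one_pow_eq_zero (hf : PowerSeries.constantCoeff f = 1) {m j : ℕ} (h : m < j) :
    PowerSeries.coeff m ((f - 1) ^ j) = 0 := by
  have hX : PowerSeries.X ∣ f - 1 := by simp [PowerSeries.X_dvd_iff, hf]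
  exact PowerSeries.X_pow_dvd_iff.1 (pow_dvd_pow_of_dvd hX j) m h

lemma powCoeff_eval_natCast (hf : PowerSeries.constantCoeff f = 1) (m N : ℕ) :
    (powCoeff f m).eval (N : ℚ) = PowerSeries.coeff m (f ^ N) := by
  set c : ℕ → ℚ := fun j => PowerSeries.coeff m ((f - 1) ^ j) * N.choose j with hc
  have hleft : (powCoeff f m).eval (N : ℚ) = ∑ j ∈ Finset.range (m + 1), c j := by
    simp [powCoeff, eval_finsetSum, binomPoly_eval_natCast, hc]
  have hright : PowerSeries.coeff m (f ^ N) = ∑ j ∈ Finset.range (N + 1), c j := by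
    conv_lhs => rw [← sub_add_cancel f 1, add_pow, map_sum]
    refine Finset.sum_congr rfl fun j _ => ?_
    rw [one_pow, mul_one, ← map_natCast PowerSeries.C, PowerSeries.coeff_mul_C]
  have hc_of_lt_left {j : ℕ} (hj : m < j) : c j = 0 := by
    simp [hc, coeff_sub_one_pow_eq_zero hf hj]
  have hc_of_lt_right {j : ℕ} (hj : N < j) : c j = 0 := by
    simp [hc, Nat.choose_eq_zero_of_lt hj]
  rw [hleft, hright]
  rcases le_total m N with h | h
  · exact Finset.sum_subset (Finset.range_mono (by omega))
      fun j _ hj => hc_of_lt_left (by simpa using hj)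
  · exact (Finset.sum_subset (Finset.range_mono (by omega))
      fun j _ hj => hc_of_lt_right (by simpa using hj)).symm

lemma eq_of_eval_natCast_eq {p q : ℚ[X]} (h : ∀ N : ℕ, p.eval (N : ℚ) = q.eval (N : ℚ)) : p = q :=
  eq_of_infinite_eval_eq p q (Set.infinite_of_injective_forall_mem Nat.cast_injective h)

lemma powCoeff_succ (hf : PowerSeries.constantCoeff f = 1) (m : ℕ) :
    C ((m + 1 : ℕ) : ℚ) * powCoeff f (m + 1) = -X * ∑ p ∈ antidiagonal m,
      C (PowerSeries.coeff p.1 (negLogDeriv f)) * powCoeff f p.2 := by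
  refine eq_of_eval_natCast_eq fun N => ?_
  have h := congrArg (PowerSeries.coeff m)
    (derivative_pow_eq_neg_mul_negLogDeriv (f := f) (by simp [hf]) N)
  rw [PowerSeries.coeff_derivative, map_neg, ← map_natCast PowerSeries.C, PowerSeries.coeff_C_mul,
    PowerSeries.coeff_mul] at h
  simp only [eval_mul, eval_neg, eval_C, eval_X, eval_finsetSum, powCoeff_eval_natCast hf]
  push_cast
  linear_combination h

/-- The polynomial `P_m` in `f(q)^{-w} = ∑ P_m(w) q^m / m!`, for `f` with constant term `1`. -/
noncomputable def negPowPoly (f : PowerSeries ℚ) (m : ℕ) : ℚ[X] :=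
  C (m.factorial : ℚ) * (powCoeff f m).comp (-X)

lemma negPowPoly_zero (f : PowerSeries ℚ) : negPowPoly f 0 = 1 := by
  simp [negPowPoly, powCoeff_zero]

lemma negPowPoly_succ (hf : PowerSeries.constantCoeff f = 1) (m : ℕ) :
    negPowPoly f (m + 1) = X * ∑ p ∈ antidiagonal m,
      C (m.descFactorial p.1 * PowerSeries.coeff p.1 (negLogDeriv f)) * negPowPoly f p.2 := by
  have h := congrArg (C (m.factorial : ℚ) * ·.comp (-X)) (powCoeff_succ hf m)
  simp only [mul_comp, C_comp, neg_comp, X_comp, neg_neg, sum_comp] at h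
  calc negPowPoly f (m + 1)
      = C (m.factorial : ℚ) * (C ((m + 1 : ℕ) : ℚ) * (powCoeff f (m + 1)).comp (-X)) := by
        rw [negPowPoly, Nat.factorial_succ, Nat.cast_mul, C_mul]; ring
    _ = _ := by
        rw [h, mul_left_comm, Finset.mul_sum (s := antidiagonal m)]
        refine congrArg _ (Finset.sum_congr rfl fun p hp => ?_)
        have hfac : (m.factorial : ℚ) = p.2.factorial * m.descFactorial p.1 := by
          rw [← mem_antidiagonal.1 hp, ← Nat.cast_mul,
            ← Nat.factorial_mul_descFactorial (Nat.le_add_right p.1 p.2), Nat.add_sub_cancel_left]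
        rw [negPowPoly, hfac]
        simp only [C_mul]
        ring

lemma negPowPoly_mem_lifts (hf : PowerSeries.constantCoeff f = 1)
    (hD : ∀ n, PowerSeries.coeff n (negLogDeriv f) ∈ Set.range (Nat.castRingHom ℚ)) (m : ℕ) :
    negPowPoly f m ∈ lifts (Nat.castRingHom ℚ) := by
  induction m using Nat.strong_induction_on with
  | _ m ih =>
    cases m with
    | zero => rw [negPowPoly_zero]; exact one_mem _
    | succ m =>
      rw [negPowPoly_succ hf]
      refine mul_mem (X_mem_lifts _) (sum_mem fun p hp => mul_mem ?_ (ih p.2 ?_))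
      · obtain ⟨d, hd⟩ := hD p.1
        rw [← hd, eq_natCast, ← Nat.cast_mul]
        exact C_mem_lifts _ (m.descFactorial p.1 * d)
      · exact Nat.lt_succ_of_le (antidiagonal.snd_le hp)

lemma natDegree_negPowPoly_le (hf : PowerSeries.constantCoeff f = 1) (m : ℕ) :
    (negPowPoly f m).natDegree ≤ m := by
  induction m using Nat.strong_induction_on with
  | _ m ih =>
    cases m with
    | zero => simp [negPowPoly_zero]
    | succ m =>
      rw [negPowPoly_succ hf, add_comm m]
      refine natDegree_mul_le_of_le natDegree_X_le
        (natDegree_sum_le_of_forall_le _ _ fun p hp => ?_)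
      exact (natDegree_C_mul_le _ _).trans
        ((ih p.2 (Nat.lt_succ_of_le (antidiagonal.snd_le hp))).trans (antidiagonal.snd_le hp))

lemma coeff_self_negPowPoly (hf : PowerSeries.constantCoeff f = 1) (m : ℕ) :
    (negPowPoly f m).coeff m = PowerSeries.constantCoeff (negLogDeriv f) ^ m := by
  induction m with
  | zero => simp [negPowPoly_zero]
  | succ m ih =>
    rw [negPowPoly_succ hf, coeff_X_mul, finsetSum_coeff, Finset.sum_eq_single (0, m)]
    · simp [ih, pow_succ']
    · intro p hp hne
      have hlt : p.2 < m := by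
        have hsum := mem_antidiagonal.1 hp
        have hfst : p.1 ≠ 0 := fun h => hne (Prod.ext h (by omega))
        omega
      rw [coeff_C_mul, coeff_eq_zero_of_natDegree_lt
        ((natDegree_negPowPoly_le hf p.2).trans_lt hlt), mul_zero]
    · simp

lemma coeff_zero_negPowPoly (hf : PowerSeries.constantCoeff f = 1) {m : ℕ} (hm : m ≠ 0) :
    (negPowPoly f m).coeff 0 = 0 := by
  obtain ⟨m, rfl⟩ := Nat.exists_eq_succ_of_ne_zero hm
  rw [negPowPoly_succ hf, coeff_X_mul_zero]

end PowerCoefficients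

section Shanks

open Finset

variable {R : Type*} [CommRing R] {q : R} {r : ℕ → R}

lemma shanks_telescope (h0 : r 0 = 0) (hr : ∀ k, (1 + q ^ k) * r k = 1 - q ^ k) {n : ℕ}
    (hn : 0 < n) {j : ℕ} (hj : j ≤ n) :
    ∑ s ∈ range j, (-1) ^ s * (∏ k ∈ Ico s n, r k + ∏ k ∈ Ico (s + 1) n, r k)
        * (r n * q ^ (s * (n + 1)) - q ^ (s * n))
      = (-1) ^ j * (1 + r n) * (∏ k ∈ Ico j n, r k) * q ^ (j * n) := by
  induction j with
  | zero => rw [prod_eq_prod_Ico_succ_bot hn, h0]; simp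
  | succ j ih =>
    have hswap : (1 + r j) * (1 - r n * q ^ j) = (1 + r n) * (q ^ n + r j) := by
      linear_combination -r n * hr j - hr n
    rw [sum_range_succ, ih (by omega), prod_eq_prod_Ico_succ_bot (by omega)]
    simp only [mul_add_one, add_one_mul, pow_add, pow_one]
    linear_combination -(-1) ^ j * (∏ k ∈ Ico (j + 1) n, r k) * q ^ (j * n) * hswap

lemma shanks_identity (h0 : r 0 = 0) (hr : ∀ k, (1 + q ^ k) * r k = 1 - q ^ k) {n : ℕ}
    (hn : 0 < n) :
    ∑ s ∈ range n, (-1) ^ s * (∏ k ∈ Ico s n, r k + ∏ k ∈ Ico (s + 1) n, r k) * q ^ (s * n)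
      = 1 + 2 * ∑ s ∈ Ico 1 n, (-1) ^ s * q ^ (s ^ 2) := by
  induction n, hn using Nat.le_induction with
  | base => simp [h0]
  | succ n hn ih =>
    have htele := shanks_telescope h0 hr hn le_rfl
    have hsucc : ∀ s ∈ range n, (-1) ^ s
        * (∏ k ∈ Ico s (n + 1), r k + ∏ k ∈ Ico (s + 1) (n + 1), r k) * q ^ (s * (n + 1))
          = (-1) ^ s * (∏ k ∈ Ico s n, r k + ∏ k ∈ Ico (s + 1) n, r k) * q ^ (s * n)
            + (-1) ^ s * (∏ k ∈ Ico s n, r k + ∏ k ∈ Ico (s + 1) n, r k)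
              * (r n * q ^ (s * (n + 1)) - q ^ (s * n)) := by
      intro s hs
      have hsn : s < n := mem_range.1 hs
      rw [prod_Ico_succ_top hsn.le, prod_Ico_succ_top (by omega)]
      ring
    rw [sum_range_succ, sum_congr rfl hsucc, sum_add_distrib, ih, htele, sum_Ico_succ_top hn]
    simp only [Ico_self, prod_empty, Nat.Ico_succ_singleton, prod_singleton, mul_add_one, pow_add,
      pow_two]
    linear_combination (-1) ^ n * q ^ (n * n) * hr n

lemma pow_dvd_altSquareSum_sub_prod (h0 : r 0 = 0) (hr : ∀ k, (1 + q ^ k) * r k = 1 - q ^ k)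
    {n : ℕ} (hn : 0 < n) :
    q ^ n ∣ 1 + 2 * ∑ s ∈ Ico 1 n, (-1) ^ s * q ^ (s ^ 2) - ∏ k ∈ Ico 1 n, r k := by
  rw [← shanks_identity h0 hr hn, range_eq_Ico, sum_eq_sum_Ico_succ_bot hn,
    prod_eq_prod_Ico_succ_bot hn, h0]
  simp only [pow_zero, zero_mul, zero_add, one_mul, mul_one, add_sub_cancel_left]
  refine dvd_sum fun s hs => (pow_dvd_pow q ?_).mul_left _
  exact Nat.le_mul_of_pos_left n (mem_Ico.1 hs).1

end Shanks

section GaussProduct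

open PowerSeries

variable (K : Type*) [Field K]

/-- The factor `(1 - q^k) / (1 + q^k)` of Gauss's product for `ϑ(-q)`; it is `0` for `k = 0`. -/
noncomputable def gaussFactor (k : ℕ) : K⟦X⟧ := (1 - X ^ k) * (1 + X ^ k)⁻¹

lemma gaussFactor_zero : gaussFactor K 0 = 0 := by
  simp [gaussFactor]

lemma one_add_X_pow_mul_gaussFactor (k : ℕ) : (1 + X ^ k) * gaussFactor K k = 1 - X ^ k := by
  rcases eq_or_ne k 0 with rfl | hk
  · simp [gaussFactor_zero]
  · rw [gaussFactor, mul_left_comm, PowerSeries.mul_inv_cancel _ (by simp [hk]), mul_one]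

lemma constantCoeff_gaussFactor {k : ℕ} (hk : k ≠ 0) : constantCoeff (gaussFactor K k) = 1 := by
  simp [gaussFactor, hk]

lemma negLogDeriv_gaussFactor {k : ℕ} (hk : k ≠ 0) :
    negLogDeriv (gaussFactor K k) = 2 * (k : K⟦X⟧) * X ^ (k - 1) * (1 - X ^ (2 * k))⁻¹ := by
  have hsub : constantCoeff (1 - X ^ k : K⟦X⟧) ≠ 0 := by simp [hk]
  have hadd : constantCoeff (1 + X ^ k : K⟦X⟧) ≠ 0 := by simp [hk]
  have hfactor : (1 - X ^ (2 * k) : K⟦X⟧)⁻¹ = (1 - X ^ k)⁻¹ * (1 + X ^ k)⁻¹ := by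
    rw [← PowerSeries.mul_inv_rev]; congr 1; ring
  rw [gaussFactor, negLogDeriv_mul hsub (by simp [hk]), negLogDeriv_inv hadd, hfactor]
  simp only [negLogDeriv, map_sub, map_add, derivative_one, derivative_pow, derivative_X]
  linear_combination
    -(k * X ^ (k - 1) * (1 - X ^ k)⁻¹) * PowerSeries.mul_inv_cancel (1 + X ^ k : K⟦X⟧) hadd
      - k * X ^ (k - 1) * (1 + X ^ k)⁻¹ * PowerSeries.mul_inv_cancel (1 - X ^ k : K⟦X⟧) hsub

lemma negLogDeriv_gaussFactor_mem_natSeries {k : ℕ} (hk : k ≠ 0) :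
    negLogDeriv (gaussFactor K k) ∈ natSeries K := by
  rw [negLogDeriv_gaussFactor K hk]
  exact mul_mem
    (mul_mem (mul_mem (ofNat_mem _ 2) (natCast_mem _ k)) (pow_mem (X_mem_natSeries K) _))
    (inv_one_sub_X_pow_mem_natSeries K (by omega))

end GaussProduct

section Theta

open PowerSeries

/-- The series `∑_{n ≥ 1} q^{n²}`. -/
noncomputable def squareSeries (R : Type*) [Semiring R] : R⟦X⟧ :=
  mk fun m => if m ≠ 0 ∧ IsSquare m then 1 else 0

/-- The theta series `ϑ(q) = 1 + 2 ∑_{n ≥ 1} q^{n²}`. -/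
noncomputable def thetaSeries (R : Type*) [Semiring R] : R⟦X⟧ := 1 + 2 * squareSeries R

lemma constantCoeff_squareSeries (R : Type*) [Semiring R] :
    constantCoeff (squareSeries R) = 0 := by
  simp [squareSeries, ← coeff_zero_eq_constantCoeff_apply]

lemma X_pow_dvd_squareSeries_sub (R : Type*) [Ring R] (n : ℕ) :
    X ^ n ∣ squareSeries R - ∑ s ∈ Finset.Ico 1 n, X ^ (s ^ 2) := by
  rw [X_pow_dvd_iff]
  intro m hm
  rw [map_sub, map_sum, squareSeries, coeff_mk, sub_eq_zero]
  simp only [coeff_X_pow]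
  split_ifs with h
  · obtain ⟨h0, a, rfl⟩ := h
    have ha : 0 < a := Nat.pos_of_mul_pos_left (Nat.pos_of_ne_zero h0)
    rw [Finset.sum_eq_single_of_mem a
      (Finset.mem_Ico.2 ⟨ha, (Nat.le_mul_self a).trans_lt hm⟩), if_pos (pow_two a).symm]
    intro s _ hs
    rw [← pow_two, if_neg fun h => hs (Nat.pow_left_injective two_ne_zero h).symm]
  · refine (Finset.sum_eq_zero fun s hs => if_neg ?_).symm
    rintro rfl
    exact h ⟨pow_ne_zero 2 (Nat.one_le_iff_ne_zero.1 (Finset.mem_Ico.1 hs).1), .sq s⟩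

lemma coeff_squareSeries_pow (R : Type*) [CommRing R] (j m : ℕ) :
    coeff m (squareSeries R ^ j) = repCount j m := by
  have htrunc := X_pow_dvd_iff.1 ((X_pow_dvd_squareSeries_sub R (m + 1)).trans
    (sub_dvd_pow_sub_pow _ _ j)) m m.lt_succ_self
  have hfin : ∑ s ∈ Finset.Ico 1 (m + 1), (X : R⟦X⟧) ^ (s ^ 2)
      = ∑ a : Fin (m + 1), if 1 ≤ a.1 then (X : R⟦X⟧) ^ (a.1 ^ 2) else 0 := by
    rw [Fin.sum_univ_eq_sum_range (fun a => if 1 ≤ a then (X : R⟦X⟧) ^ (a ^ 2) else 0),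
      Finset.sum_range_succ', Finset.sum_Ico_eq_sum_range]
    simp [add_comm]
  rw [map_sub, sub_eq_zero] at htrunc
  rw [htrunc, hfin, Fintype.sum_pow, map_sum, repCount, Finset.card_filter, Nat.cast_sum]
  refine Finset.sum_congr rfl fun a _ => ?_
  rw [Finset.prod_ite_zero, Finset.prod_pow_eq_pow_sum]
  by_cases h : ∀ i, 1 ≤ (a i).1
  · simp [h, coeff_X_pow, eq_comm]
  · simp [h]

lemma powCoeff_thetaSeries {m : ℕ} (hm : m ≠ 0) : powCoeff (thetaSeries ℚ) m = thetaCoeff m := by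
  have hcoeff (j : ℕ) :
      coeff m ((thetaSeries ℚ - 1) ^ j) = (2 : ℚ) ^ j * (repCount j m : ℚ) := by
    rw [thetaSeries, add_sub_cancel_left, mul_pow, ← coeff_squareSeries_pow ℚ, ← coeff_C_mul,
      map_pow, map_ofNat]
  have hzero : coeff m ((thetaSeries ℚ - 1) ^ 0) = 0 := by simp [coeff_one, hm]
  rw [powCoeff, Finset.range_eq_Ico, Finset.sum_eq_sum_Ico_succ_bot m.succ_pos, hzero, zero_smul,
    zero_add, thetaCoeff]
  simp only [hcoeff]
  rfl

lemma thetaCoeffStar_eq_negPowPoly {m : ℕ} (hm : m ≠ 0) :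
    thetaCoeffStar m = negPowPoly (rescale (-1) (thetaSeries ℚ)) m := by
  rw [thetaCoeffStar, negPowPoly, powCoeff_rescale, powCoeff_thetaSeries hm, Polynomial.mul_comp,
    Polynomial.C_comp, Polynomial.C_mul]
  ring

lemma rescale_neg_one_X_pow_sq (R : Type*) [CommRing R] (s : ℕ) :
    rescale (-1 : R) (X ^ (s ^ 2)) = (-1) ^ s * X ^ (s ^ 2) := by
  rw [map_pow, rescale_neg_one_X, neg_pow,
    neg_one_pow_congr (Nat.even_pow' (m := s) two_ne_zero)]

lemma constantCoeff_rescale_thetaSeries (R : Type*) [CommRing R] :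
    constantCoeff (rescale (-1 : R) (thetaSeries R)) = 1 := by
  rw [← coeff_zero_eq_constantCoeff_apply, coeff_rescale, coeff_zero_eq_constantCoeff_apply]
  simp [thetaSeries, constantCoeff_squareSeries]

lemma X_pow_dvd_rescale_thetaSeries_sub (R : Type*) [CommRing R] (n : ℕ) :
    X ^ n ∣ rescale (-1 : R) (thetaSeries R)
      - (1 + 2 * ∑ s ∈ Finset.Ico 1 n, (-1) ^ s * X ^ (s ^ 2)) := by
  have h := map_dvd (rescale (-1 : R)) (X_pow_dvd_squareSeries_sub R n)
  rw [map_pow, rescale_neg_one_X, map_sub, map_sum] at h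
  simp only [rescale_neg_one_X_pow_sq] at h
  have hX : (X : R⟦X⟧) ^ n ∣ (-X) ^ n := pow_dvd_pow_of_dvd (dvd_neg.2 dvd_rfl) n
  convert (hX.trans h).mul_left 2 using 1
  rw [thetaSeries, map_add, map_one, map_mul, map_ofNat]
  ring

lemma X_pow_dvd_rescale_thetaSeries_sub_prod (K : Type*) [Field K] {n : ℕ} (hn : 0 < n) :
    X ^ n ∣ rescale (-1 : K) (thetaSeries K) - ∏ k ∈ Finset.Ico 1 n, gaussFactor K k := by
  have hshanks := pow_dvd_altSquareSum_sub_prod (gaussFactor_zero K)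
    (one_add_X_pow_mul_gaussFactor K) hn
  simpa using dvd_add (X_pow_dvd_rescale_thetaSeries_sub K n) hshanks

lemma coeff_negLogDeriv_rescale_thetaSeries_mem_range (K : Type*) [Field K] (n : ℕ) :
    coeff n (negLogDeriv (rescale (-1 : K) (thetaSeries K))) ∈ Set.range (Nat.castRingHom K) := by
  have hfactor : ∀ k ∈ Finset.Ico 1 (n + 2), constantCoeff (gaussFactor K k) = 1 := fun k hk =>
    constantCoeff_gaussFactor K (Nat.one_le_iff_ne_zero.1 (Finset.mem_Ico.1 hk).1)
  have hprod : constantCoeff (∏ k ∈ Finset.Ico 1 (n + 2), gaussFactor K k) = 1 := by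
    rw [map_prod, Finset.prod_eq_one hfactor]
  have hdvd := X_pow_dvd_negLogDeriv_sub (by simp [constantCoeff_rescale_thetaSeries])
    (by simp [hprod]) (X_pow_dvd_rescale_thetaSeries_sub_prod K (n + 1).succ_pos)
  have hcoeff := X_pow_dvd_iff.1 hdvd n n.lt_succ_self
  rw [map_sub, sub_eq_zero] at hcoeff
  rw [hcoeff, negLogDeriv_prod _ _ fun k hk => by simp [hfactor k hk]]
  refine coeff_mem_range_of_mem_natSeries (sum_mem fun k hk => ?_) n
  exact negLogDeriv_gaussFactor_mem_natSeries K
    (Nat.one_le_iff_ne_zero.1 (Finset.mem_Ico.1 hk).1)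

lemma constantCoeff_negLogDeriv_rescale_thetaSeries (K : Type*) [Field K] :
    constantCoeff (negLogDeriv (rescale (-1 : K) (thetaSeries K))) = 2 := by
  have htwo : coeff 1 (2 * squareSeries K) = 2 := by
    rw [two_mul, map_add, squareSeries, coeff_mk, if_pos ⟨one_ne_zero, .one⟩, one_add_one_eq_two]
  rw [constantCoeff_negLogDeriv (constantCoeff_rescale_thetaSeries K), coeff_rescale, thetaSeries,
    map_add, htwo, coeff_one]
  simp

end Theta

end ThetaPower

/-- for `m ≥ 1`, `c_m^*(w)` has nonnegative integer coefficients,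
leading term `2^m w^m`, and zero constant term. -/
theorem thetaCoeffStar_nonneg (m : ℕ) (hm : 1 ≤ m) :
    (∀ k : ℕ, ∃ n : ℕ, (thetaCoeffStar m).coeff k = (n : ℚ)) ∧
    (thetaCoeffStar m).degree = m ∧
    (thetaCoeffStar m).leadingCoeff = 2^m ∧
    (thetaCoeffStar m).coeff 0 = 0 := by
  have hm0 : m ≠ 0 := Nat.one_le_iff_ne_zero.1 hm
  have hconst := ThetaPower.constantCoeff_rescale_thetaSeries ℚ
  rw [ThetaPower.thetaCoeffStar_eq_negPowPoly hm0]
  set p := ThetaPower.negPowPoly (PowerSeries.rescale (-1) (ThetaPower.thetaSeries ℚ)) m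
  have hnat : p ∈ Polynomial.lifts (Nat.castRingHom ℚ) :=
    ThetaPower.negPowPoly_mem_lifts hconst
      (ThetaPower.coeff_negLogDeriv_rescale_thetaSeries_mem_range ℚ) m
  have htop : p.coeff m = 2 ^ m := by
    rw [ThetaPower.coeff_self_negPowPoly hconst,
      ThetaPower.constantCoeff_negLogDeriv_rescale_thetaSeries]
  have hdeg : p.natDegree = m :=
    Polynomial.natDegree_eq_of_le_of_coeff_ne_zero
      (ThetaPower.natDegree_negPowPoly_le hconst m) (by simp [htop])
  refine ⟨fun k => ?_, ?_, ?_, ThetaPower.coeff_zero_negPowPoly hconst hm0⟩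
  · obtain ⟨n, hn⟩ := (Polynomial.lifts_iff_coeff_lifts p).1 hnat k
    exact ⟨n, hn.symm⟩
  · exact (Polynomial.degree_eq_iff_natDegree_eq_of_pos hm).2 hdeg
  · rw [Polynomial.leadingCoeff, hdeg, htop]
end

section
/- The Fourier coefficients c'_m of log θ, defined by log θ(t) = Σ_{m≥1} c'_m e^{-πmt}, are given by c'_m = 2σ_{-1}(m) - 5σ_{-1}(m/2) + 2σ_{-1}(m/4), where σ_{-1}(m) = Σ_{d|m} 1/d for positive integers m and σ_{-1}(x) = 0 if x is not a positive integer. -/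
/-- `σ₋₁(m) = ∑_{d ∣ m} 1/d` (equal to `0` for `m = 0`). -/
def sigmaNegOne (m : ℕ) : ℚ := ∑ d ∈ m.divisors, (1 : ℚ) / d

/-- `c'_m = 2σ₋₁(m) - 5σ₋₁(m/2) + 2σ₋₁(m/4)`, where `σ₋₁(x) = 0` if `x` is not a
positive integer. -/
def cPrime (m : ℕ) : ℚ :=
  2 * sigmaNegOne m - 5 * (if 2 ∣ m then sigmaNegOne (m / 2) else 0)
    + 2 * (if 4 ∣ m then sigmaNegOne (m / 4) else 0)

/-!
Jacobi's triple product follows from the `q`-binomial theorem: both sides of the finite identity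
`∏_{i<n} (1 + z q^{2i+1}) (1 + z⁻¹ q^{2i+1}) = ∑_{|k|≤n} [2n; n+k]_{q²} z^k q^{k²}` converge as
`n → ∞`, since `[2n; n+k]_{q²}` tends boundedly to `1 / η̃(q²)`, where `η̃(q) = ∏_{k≥1} (1 - q^k)`.
At `z = 1` the odd product is `η̃(q²)² / (η̃(q) η̃(q⁴))`, so that
`∑_k q^{k²} = η̃(q)⁻² η̃(q²)⁵ η̃(q⁴)⁻²`. Taking logarithms, the double series
`log η̃(q) = -∑_{k,n≥1} q^{kn} / n` collected by powers of `q` is `-∑_m σ₋₁(m) q^m`.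
-/

open Filter Finset Topology

section GaussianBinomial

/-- The Gaussian binomial coefficient `[n; k]_q`, defined by the `q`-Pascal rule so that it makes
sense at every element `q` of a semiring; it vanishes for `n < k`, as `Nat.choose` does. -/
def gaussBinom {R : Type*} [CommSemiring R] (q : R) : ℕ → ℕ → R
  | _, 0 => 1
  | 0, _ + 1 => 0
  | n + 1, k + 1 => gaussBinom q n k + q ^ (k + 1) * gaussBinom q n (k + 1)

section CommSemiring

variable {R : Type*} [CommSemiring R]

@[simp]
lemma gaussBinom_zero_right (q : R) (n : ℕ) : gaussBinom q n 0 = 1 := by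
  cases n <;> rfl

lemma gaussBinom_succ_succ (q : R) (n k : ℕ) :
    gaussBinom q (n + 1) (k + 1) = gaussBinom q n k + q ^ (k + 1) * gaussBinom q n (k + 1) :=
  rfl

lemma gaussBinom_eq_zero_of_lt (q : R) {n k : ℕ} (h : n < k) : gaussBinom q n k = 0 := by
  induction n generalizing k with
  | zero => obtain ⟨k, rfl⟩ := Nat.exists_eq_succ_of_ne_zero h.ne'; rfl
  | succ n ih =>
    obtain ⟨k, rfl⟩ := Nat.exists_eq_succ_of_ne_zero (Nat.ne_zero_of_lt h)
    rw [gaussBinom_succ_succ, ih (by lia), ih (by lia), mul_zero, add_zero]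

lemma gaussBinom_self (q : R) (n : ℕ) : gaussBinom q n n = 1 := by
  induction n with
  | zero => rfl
  | succ n ih =>
    rw [gaussBinom_succ_succ, ih, gaussBinom_eq_zero_of_lt q n.lt_succ_self, mul_zero, add_zero]

theorem prod_one_add_mul_pow_eq_sum_gaussBinom (q x : R) (n : ℕ) :
    ∏ k ∈ range n, (1 + x * q ^ k) =
      ∑ k ∈ range (n + 1), gaussBinom q n k * x ^ k * q ^ k.choose 2 := by
  induction n generalizing x with
  | zero => simp
  | succ n ih =>
    calc ∏ k ∈ range (n + 1), (1 + x * q ^ k)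
        = (∏ k ∈ range n, (1 + x * q * q ^ k)) * (1 + x) := by
          rw [prod_range_succ', pow_zero, mul_one]
          congr! 3
          rw [pow_succ', mul_assoc]
      _ = ∑ k ∈ range (n + 2), gaussBinom q n k * (x * q) ^ k * q ^ k.choose 2
          + ∑ k ∈ range (n + 1), gaussBinom q n k * (x * q) ^ k * q ^ k.choose 2 * x := by
          rw [ih, mul_one_add, sum_mul, sum_range_succ _ (n + 1),
            gaussBinom_eq_zero_of_lt q n.lt_succ_self, zero_mul, zero_mul, add_zero]
      _ = ∑ k ∈ range (n + 2), gaussBinom q (n + 1) k * x ^ k * q ^ k.choose 2 := by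
          rw [sum_range_succ' _ (n + 1), sum_range_succ' _ (n + 1), add_right_comm,
            ← sum_add_distrib]
          congr 1
          · refine sum_congr rfl fun k _ ↦ ?_
            rw [gaussBinom_succ_succ, Nat.choose_succ_succ' k 1, Nat.choose_one_right]
            ring
          · simp

private lemma natAbs_sub_succ_sq_add (j n : ℕ) :
    ((j + 1 : ℕ) - n : ℤ).natAbs ^ 2 + (2 * n + 1) = ((j : ℤ) - n).natAbs ^ 2 + 2 * (j + 1) := by
  zify
  simp only [sq_abs]
  ring

/-- The finite triple product, multiplied by `z ^ n` to avoid inverses. -/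
theorem prod_one_add_mul_prod_add_eq_sum_gaussBinom (q z : R) (m n : ℕ) :
    (∏ i ∈ range m, (1 + z * q ^ (2 * i + 1))) * ∏ i ∈ range n, (z + q ^ (2 * i + 1)) =
      ∑ j ∈ range (m + n + 1),
        gaussBinom (q ^ 2) (m + n) j * z ^ j * q ^ ((j : ℤ) - n).natAbs ^ 2 := by
  induction n with
  | zero =>
    have sq_eq (k : ℕ) : k ^ 2 = k + 2 * k.choose 2 := by
      rw [Nat.choose_two_right, Nat.mul_div_cancel' (Nat.even_mul_pred_self k).two_dvd]
      cases k with
      | zero => rfl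
      | succ k => rw [Nat.add_sub_cancel]; ring
    have := prod_one_add_mul_pow_eq_sum_gaussBinom (q ^ 2) (z * q) m
    simp only [← pow_mul, mul_assoc, mul_pow, ← pow_succ', ← pow_add, ← sq_eq] at this
    simpa [mul_assoc] using this
  | succ n ih =>
    set N := m + n
    rw [prod_range_succ, ← mul_assoc, ih, mul_add, ← add_assoc, add_comm, sum_mul, sum_mul,
      sum_range_succ' _ (N + 1)]
    have extend : ∑ j ∈ range (N + 1), gaussBinom (q ^ 2) N j * z ^ j *
          q ^ ((j : ℤ) - n).natAbs ^ 2 * q ^ (2 * n + 1) =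
        ∑ j ∈ range (N + 2), gaussBinom (q ^ 2) N j * z ^ j *
          q ^ ((j : ℤ) - n).natAbs ^ 2 * q ^ (2 * n + 1) := by
      simp [sum_range_succ _ (N + 1), gaussBinom_eq_zero_of_lt (q ^ 2) N.lt_succ_self]
    rw [extend, sum_range_succ' _ (N + 1), add_right_comm, ← sum_add_distrib]
    congr 1
    · refine sum_congr rfl fun j _ ↦ ?_
      have exponent : ((j + 1 : ℕ) - (n + 1 : ℕ) : ℤ) = j - n := by lia
      rw [mul_assoc _ (q ^ _), ← pow_add, natAbs_sub_succ_sq_add, gaussBinom_succ_succ, exponent]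
      ring
    · have exponent_zero : ((0 : ℕ) - n : ℤ).natAbs = n := by lia
      have exponent_succ : ((0 : ℕ) - (n + 1 : ℕ) : ℤ).natAbs = n + 1 := by lia
      rw [exponent_zero, exponent_succ, gaussBinom_zero_right, gaussBinom_zero_right, pow_zero]
      ring

end CommSemiring

/-- The `q`-Pochhammer symbol `(q; q)_n`. -/
def qPochhammer {R : Type*} [CommRing R] (q : R) (n : ℕ) : R :=
  ∏ k ∈ range n, (1 - q ^ (k + 1))

lemma qPochhammer_succ {R : Type*} [CommRing R] (q : R) (n : ℕ) :
    qPochhammer q (n + 1) = qPochhammer q n * (1 - q ^ (n + 1)) :=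
  prod_range_succ _ n

theorem gaussBinom_add_mul_qPochhammer {R : Type*} [CommRing R] (q : R) (i j : ℕ) :
    gaussBinom q (i + j) i * (qPochhammer q i * qPochhammer q j) = qPochhammer q (i + j) := by
  induction i generalizing j with
  | zero => simp [qPochhammer]
  | succ i ih =>
    induction j with
    | zero => simp [gaussBinom_self, qPochhammer]
    | succ j ihj =>
      have left := ih (j + 1)
      rw [show i + 1 + (j + 1) = i + (j + 1) + 1 by ring, gaussBinom_succ_succ,
        qPochhammer_succ q (i + (j + 1))]
      rw [show i + 1 + j = i + (j + 1) by ring] at ihj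
      rw [qPochhammer_succ] at ihj ⊢
      rw [qPochhammer_succ] at left ⊢
      linear_combination (1 - q ^ (i + 1)) * left + q ^ (i + 1) * (1 - q ^ (j + 1)) * ihj

end GaussianBinomial

section TripleProduct

/-- Euler's function `η̃(q) = ∏_{k ≥ 1} (1 - q ^ k)`. -/
noncomputable def eulerFunction {𝕜 : Type*} [NormedField 𝕜] (q : 𝕜) : 𝕜 :=
  ∏' k : ℕ, (1 - q ^ (k + 1))

variable {𝕜 : Type*} [NormedField 𝕜] {q : 𝕜}

lemma one_sub_pow_succ_ne_zero (hq : ‖q‖ < 1) (k : ℕ) : 1 - q ^ (k + 1) ≠ 0 := by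
  refine sub_ne_zero.mpr fun h ↦ ?_
  have := pow_lt_one₀ (norm_nonneg q) hq k.succ_ne_zero
  rw [← norm_pow, ← h, norm_one] at this
  exact this.false

lemma norm_pow_lt_one (hq : ‖q‖ < 1) {n : ℕ} (hn : n ≠ 0) : ‖q ^ n‖ < 1 :=
  norm_pow q n ▸ pow_lt_one₀ (norm_nonneg q) hq hn

lemma summable_norm_mul_pow_comp (hq : ‖q‖ < 1) (z : 𝕜) {e : ℕ → ℕ} (he : e.Injective) :
    Summable fun k ↦ ‖z * q ^ e k‖ := by
  simp only [norm_mul, norm_pow]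
  exact ((summable_geometric_of_lt_one (norm_nonneg q) hq).comp_injective he).mul_left ‖z‖

lemma qPochhammer_ne_zero (hq : ‖q‖ < 1) (n : ℕ) : qPochhammer q n ≠ 0 :=
  prod_ne_zero_iff.mpr fun k _ ↦ one_sub_pow_succ_ne_zero hq k

lemma gaussBinom_add_eq_div (hq : ‖q‖ < 1) (i j : ℕ) :
    gaussBinom q (i + j) i = qPochhammer q (i + j) / (qPochhammer q i * qPochhammer q j) :=
  eq_div_of_mul_eq (mul_ne_zero (qPochhammer_ne_zero hq i) (qPochhammer_ne_zero hq j))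
    (gaussBinom_add_mul_qPochhammer q i j)

lemma summable_norm_pow_mul_pow_sq (hq : ‖q‖ < 1) (z : 𝕜) :
    Summable fun n : ℕ ↦ ‖z ^ n * q ^ n ^ 2‖ := by
  have ratio_tendsto : Tendsto (fun n : ℕ ↦ ‖z * q ^ (2 * n + 1)‖) atTop (𝓝 0) :=
    (summable_norm_mul_pow_comp hq z fun _ _ h ↦ by simpa using h).tendsto_atTop_zero
  refine summable_of_ratio_norm_eventually_le one_half_lt_one ?_
  filter_upwards [ratio_tendsto.eventually_le_const one_half_pos] with n hn
  calc ‖‖z ^ (n + 1) * q ^ (n + 1) ^ 2‖‖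
      = ‖z * q ^ (2 * n + 1)‖ * ‖‖z ^ n * q ^ n ^ 2‖‖ := by
        rw [norm_norm, norm_norm, ← norm_mul]
        ring_nf
    _ ≤ 1 / 2 * ‖‖z ^ n * q ^ n ^ 2‖‖ := by gcongr

lemma summable_norm_zpow_mul_pow_natAbs_sq (hq : ‖q‖ < 1) (z : 𝕜) :
    Summable fun k : ℤ ↦ ‖z ^ k * q ^ k.natAbs ^ 2‖ :=
  .of_nat_of_neg (by simpa using summable_norm_pow_mul_pow_sq hq z)
    (by simpa using summable_norm_pow_mul_pow_sq hq z⁻¹)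

lemma prod_mul_prod_inv_eq_sum_gaussBinom (q : 𝕜) {z : 𝕜} (hz : z ≠ 0) (n : ℕ) :
    (∏ i ∈ range n, (1 + z * q ^ (2 * i + 1))) * ∏ i ∈ range n, (1 + z⁻¹ * q ^ (2 * i + 1)) =
      ∑ k ∈ Icc (-n : ℤ) n,
        gaussBinom (q ^ 2) (2 * n) (n + k).toNat * (z ^ k * q ^ k.natAbs ^ 2) := by
  have clear_inv : ∏ i ∈ range n, (z + q ^ (2 * i + 1)) =
      z ^ n * ∏ i ∈ range n, (1 + z⁻¹ * q ^ (2 * i + 1)) := by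
    rw [← card_range n, ← prod_const, card_range, ← prod_mul_distrib]
    exact prod_congr rfl fun i _ ↦ by rw [mul_one_add, mul_inv_cancel_left₀ hz]
  have finite := prod_one_add_mul_prod_add_eq_sum_gaussBinom q z n n
  rw [clear_inv, mul_left_comm, ← two_mul] at finite
  refine mul_left_cancel₀ (pow_ne_zero n hz) (finite.trans ?_)
  rw [mul_sum]
  refine sum_nbij' (fun j ↦ (j : ℤ) - n) (fun k ↦ (n + k).toNat) ?_ ?_ ?_ ?_ fun j _ ↦ ?_
  any_goals simp only [mem_range, mem_Icc]; lia
  have : z ^ j = z ^ n * z ^ ((j : ℤ) - n) := by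
    rw [← zpow_natCast z n, ← zpow_add₀ hz, add_sub_cancel, zpow_natCast]
  rw [add_sub_cancel, Int.toNat_natCast, this]
  ring

variable [CompleteSpace 𝕜]

lemma hasProd_one_add_mul_pow_comp (hq : ‖q‖ < 1) (z : 𝕜) {e : ℕ → ℕ} (he : e.Injective) :
    HasProd (fun k ↦ 1 + z * q ^ e k) (∏' k, (1 + z * q ^ e k)) :=
  (multipliable_one_add_of_summable (summable_norm_mul_pow_comp hq z he)).hasProd

lemma hasProd_eulerFunction (hq : ‖q‖ < 1) :
    HasProd (fun k : ℕ ↦ 1 - q ^ (k + 1)) (eulerFunction q) := by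
  simpa [← sub_eq_add_neg, eulerFunction] using
    hasProd_one_add_mul_pow_comp hq (-1) (add_left_injective 1)

lemma eulerFunction_ne_zero (hq : ‖q‖ < 1) : eulerFunction q ≠ 0 := by
  have := tprod_one_add_ne_zero_of_summable (f := fun k : ℕ ↦ -1 * q ^ (k + 1))
    (fun k ↦ by simpa [← sub_eq_add_neg] using one_sub_pow_succ_ne_zero hq k)
    (summable_norm_mul_pow_comp hq (-1) (add_left_injective 1))
  simpa [← sub_eq_add_neg, eulerFunction] using this

lemma tendsto_qPochhammer (hq : ‖q‖ < 1) :
    Tendsto (qPochhammer q) atTop (𝓝 (eulerFunction q)) :=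
  (hasProd_eulerFunction hq).tendsto_prod_nat

lemma tendsto_gaussBinom {ι : Type*} {l : Filter ι} {a b : ι → ℕ} (hq : ‖q‖ < 1)
    (ha : Tendsto a l atTop) (hb : Tendsto b l atTop) :
    Tendsto (fun i ↦ gaussBinom q (a i + b i) (a i)) l (𝓝 (eulerFunction q)⁻¹) := by
  have hE := eulerFunction_ne_zero hq
  have hP := tendsto_qPochhammer hq
  have := (hP.comp (tendsto_atTop_mono (fun i ↦ Nat.le_add_right (a i) (b i)) ha)).div
    ((hP.comp ha).mul (hP.comp hb)) (mul_ne_zero hE hE)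
  rw [div_mul_cancel_left₀ hE] at this
  exact this.congr fun i ↦ (gaussBinom_add_eq_div hq (a i) (b i)).symm

lemma exists_norm_gaussBinom_le (hq : ‖q‖ < 1) : ∃ C, ∀ n k, ‖gaussBinom q n k‖ ≤ C := by
  have hP := tendsto_qPochhammer hq
  obtain ⟨A, hA⟩ := (Metric.isBounded_range_of_tendsto _ hP).exists_norm_le
  obtain ⟨B, hB⟩ := (Metric.isBounded_range_of_tendsto _
    (hP.inv₀ (eulerFunction_ne_zero hq))).exists_norm_le
  simp only [Set.forall_mem_range] at hA hB
  have hA0 : 0 ≤ A := (norm_nonneg _).trans (hA 0)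
  have hB0 : 0 ≤ B := (norm_nonneg _).trans (hB 0)
  refine ⟨A * (B * B), fun n k ↦ ?_⟩
  rcases lt_or_ge n k with hnk | hkn
  · rw [gaussBinom_eq_zero_of_lt q hnk, norm_zero]
    positivity
  · obtain ⟨j, rfl⟩ := Nat.exists_eq_add_of_le hkn
    rw [gaussBinom_add_eq_div hq, div_eq_mul_inv, mul_inv, norm_mul, norm_mul]
    gcongr
    exacts [hA _, hB _, hB _]

lemma tendsto_sum_gaussBinom_mul (hq : ‖q‖ < 1) {f : ℤ → 𝕜} (hf : Summable fun k ↦ ‖f k‖) :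
    Tendsto (fun n : ℕ ↦ ∑ k ∈ Icc (-n : ℤ) n, gaussBinom q (2 * n) (n + k).toNat * f k)
      atTop (𝓝 ((eulerFunction q)⁻¹ * ∑' k, f k)) := by
  obtain ⟨C, hC⟩ := exists_norm_gaussBinom_le hq
  simp only [sum_eq_tsum_indicator (L := .unconditional ℤ), ← tsum_mul_left]
  refine tendsto_tsum_of_dominated_convergence (hf.mul_left C) (fun k ↦ ?_)
    (.of_forall fun n k ↦ (norm_indicator_le_norm_self _ k).trans ?_)
  · have hplus : Tendsto (fun n : ℕ ↦ (n + k).toNat) atTop atTop :=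
      tendsto_atTop_mono (fun n ↦ by lia) (tendsto_sub_atTop_nat k.natAbs)
    have hminus : Tendsto (fun n : ℕ ↦ (n - k).toNat) atTop atTop :=
      tendsto_atTop_mono (fun n ↦ by lia) (tendsto_sub_atTop_nat k.natAbs)
    refine ((tendsto_gaussBinom hq hplus hminus).mul_const (f k)).congr' ?_
    filter_upwards [eventually_ge_atTop k.natAbs] with n hn
    have hk : k ∈ ((Icc (-n : ℤ) n : Finset ℤ) : Set ℤ) := by
      rw [coe_Icc, Set.mem_Icc]
      lia
    rw [Set.indicator_of_mem hk, show (n + k).toNat + (n - k).toNat = 2 * n by lia]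
  · rw [norm_mul]
    gcongr
    exact hC _ _

theorem jacobi_triple_product (hq : ‖q‖ < 1) {z : 𝕜} (hz : z ≠ 0) :
    HasSum (fun k : ℤ ↦ z ^ k * q ^ k.natAbs ^ 2)
      (eulerFunction (q ^ 2) * ((∏' i : ℕ, (1 + z * q ^ (2 * i + 1))) *
        ∏' i : ℕ, (1 + z⁻¹ * q ^ (2 * i + 1)))) := by
  have hq2 := norm_pow_lt_one hq two_ne_zero
  have odd_injective : Function.Injective fun i : ℕ ↦ 2 * i + 1 := fun _ _ h ↦ by simpa using h
  have hs := summable_norm_zpow_mul_pow_natAbs_sq hq z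
  have sum_tendsto := tendsto_sum_gaussBinom_mul hq2 hs
  have prod_tendsto :=
    (hasProd_one_add_mul_pow_comp hq z odd_injective).tendsto_prod_nat.mul
      (hasProd_one_add_mul_pow_comp hq z⁻¹ odd_injective).tendsto_prod_nat
  simp only [prod_mul_prod_inv_eq_sum_gaussBinom q hz] at prod_tendsto
  rw [tendsto_nhds_unique prod_tendsto sum_tendsto,
    mul_inv_cancel_left₀ (eulerFunction_ne_zero hq2)]
  exact hs.of_norm.hasSum

end TripleProduct

section ThetaProduct

variable {𝕜 : Type*} [NormedField 𝕜] [CompleteSpace 𝕜] {q : 𝕜}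

lemma hasProd_one_add_pow_succ (hq : ‖q‖ < 1) :
    HasProd (fun k : ℕ ↦ 1 + q ^ (k + 1)) (eulerFunction (q ^ 2) / eulerFunction q) := by
  refine ((hasProd_eulerFunction (norm_pow_lt_one hq two_ne_zero)).div₀
    (hasProd_eulerFunction hq) (eulerFunction_ne_zero hq)).congr fun s ↦ ?_
  refine prod_congr rfl fun k _ ↦ (eq_div_of_mul_eq (one_sub_pow_succ_ne_zero hq k) ?_).symm
  ring

theorem tprod_one_add_odd_pow (hq : ‖q‖ < 1) :
    ∏' i : ℕ, (1 + q ^ (2 * i + 1)) =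
      eulerFunction (q ^ 2) ^ 2 / (eulerFunction q * eulerFunction (q ^ 4)) := by
  have hq2 := norm_pow_lt_one hq two_ne_zero
  have h1 := eulerFunction_ne_zero hq
  have h2 := eulerFunction_ne_zero hq2
  have h4 := eulerFunction_ne_zero (norm_pow_lt_one hq four_ne_zero)
  have odd : HasProd (fun i : ℕ ↦ 1 + q ^ (2 * i + 1)) (∏' i : ℕ, (1 + q ^ (2 * i + 1))) := by
    simpa using hasProd_one_add_mul_pow_comp hq 1 (e := fun i ↦ 2 * i + 1) fun _ _ h ↦ by
      simpa using h
  have even : HasProd (fun i : ℕ ↦ 1 + q ^ (2 * i + 1 + 1))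
      (eulerFunction (q ^ 4) / eulerFunction (q ^ 2)) := by
    simpa [← pow_mul, mul_add] using hasProd_one_add_pow_succ hq2
  have split := (odd.even_mul_odd (f := fun k ↦ 1 + q ^ (k + 1)) even).unique
    (hasProd_one_add_pow_succ hq)
  field_simp at split ⊢
  linear_combination split

theorem hasSum_pow_natAbs_sq (hq : ‖q‖ < 1) :
    HasSum (fun k : ℤ ↦ q ^ k.natAbs ^ 2)
      (eulerFunction (q ^ 2) ^ 5 / (eulerFunction q ^ 2 * eulerFunction (q ^ 4) ^ 2)) := by
  have := jacobi_triple_product hq one_ne_zero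
  simp only [one_zpow, inv_one, one_mul, tprod_one_add_odd_pow hq] at this
  convert! this using 1
  field_simp

end ThetaProduct

section LogSeries

theorem hasSum_sum_divisorsAntidiagonal {M : Type*} [AddCommMonoid M] [TopologicalSpace M]
    [ContinuousAdd M] [RegularSpace M] {f : ℕ → ℕ → M} {s : M}
    (h : HasSum (fun p : ℕ+ × ℕ+ ↦ f p.1 p.2) s) :
    HasSum (fun n : ℕ ↦ ∑ p ∈ n.divisorsAntidiagonal, f p.1 p.2) s := by
  rw [← PNat.coe_injective.hasSum_iff]
  · refine (sigmaAntidiagonalEquivProd.hasSum_iff.mpr h).sigma fun n ↦ ?_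
    have := hasSum_fintype (fun p : Nat.divisorsAntidiagonal n ↦ f p.1.1 p.1.2)
    rwa [univ_eq_attach, sum_attach _ fun p : ℕ × ℕ ↦ f p.1 p.2] at this
  · intro n hn
    obtain rfl : n = 0 := by
      by_contra h0
      exact hn ⟨⟨n, Nat.pos_of_ne_zero h0⟩, rfl⟩
    simp

theorem hasSum_ite_dvd {M : Type*} [AddCommMonoid M] [TopologicalSpace M] {f : ℕ → M} {s : M}
    (h : HasSum f s) {d : ℕ} (hd : d ≠ 0) :
    HasSum (fun m ↦ if d ∣ m then f (m / d) else 0) s := by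
  rw [← (mul_right_injective₀ hd).hasSum_iff]
  · simpa [Function.comp_def, Nat.mul_div_cancel_left _ (Nat.pos_of_ne_zero hd)] using h
  · rintro m hm
    exact if_neg fun ⟨k, hk⟩ ↦ hm ⟨k, hk.symm⟩

variable {q : ℝ}

lemma sigmaNegOne_mul_pow (q : ℝ) (m : ℕ) :
    (sigmaNegOne m : ℝ) * q ^ m = ∑ p ∈ m.divisorsAntidiagonal, q ^ (p.1 * p.2) / p.2 := by
  have (p) (hp : p ∈ m.divisorsAntidiagonal) : q ^ (p.1 * p.2) / p.2 = q ^ m * (1 / p.2) := by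
    rw [(Nat.mem_divisorsAntidiagonal.mp hp).1, mul_one_div]
  rw [sum_congr rfl this, ← mul_sum, Nat.sum_divisorsAntidiagonal' fun _ d ↦ 1 / (d : ℝ),
    sigmaNegOne, mul_comm]
  push_cast
  rfl

lemma hasSum_log_one_sub_pow (hq : ‖q‖ < 1) :
    HasSum (fun k : ℕ ↦ Real.log (1 - q ^ (k + 1))) (Real.log (eulerFunction q)) := by
  have factor_pos (k : ℕ) : 0 < 1 - q ^ (k + 1) :=
    sub_pos.mpr ((Real.le_norm_self _).trans_lt (norm_pow_lt_one hq k.succ_ne_zero))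
  have hs : Summable fun k : ℕ ↦ Real.log (1 - q ^ (k + 1)) := by
    simpa [sub_eq_add_neg] using Real.summable_log_one_add_of_summable
      (summable_norm_mul_pow_comp hq (-1) (add_left_injective 1)).of_norm
  rw [eulerFunction, ← Real.rexp_tsum_eq_tprod factor_pos hs, Real.log_exp]
  exact hs.hasSum

lemma summable_pow_mul_div (hq : ‖q‖ < 1) :
    Summable fun p : ℕ+ × ℕ+ ↦ q ^ (p.1 * p.2 : ℕ) / (p.2 : ℕ) := by
  have double_geometric := (summable_prod_mul_pow (𝕜 := ℝ) 0 hq).norm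
  simp only [pow_zero, one_mul] at double_geometric
  refine double_geometric.of_norm_bounded fun p ↦ ?_
  rw [norm_div, Real.norm_natCast]
  exact div_le_self (norm_nonneg _) (mod_cast (one_le : 1 ≤ p.2))

theorem hasSum_sigmaNegOne_mul_pow (hq : ‖q‖ < 1) :
    HasSum (fun m : ℕ ↦ (sigmaNegOne m : ℝ) * q ^ m) (-Real.log (eulerFunction q)) := by
  have inner (k : ℕ+) : HasSum (fun n : ℕ+ ↦ q ^ (k * n : ℕ) / (n : ℕ))
      (-Real.log (1 - q ^ (k : ℕ))) := by
    rw [hasSum_pnat_iff_hasSum_succ (f := fun n ↦ q ^ (k * n : ℕ) / n)]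
    simpa [pow_mul] using
      Real.hasSum_pow_div_log_of_abs_lt_one (norm_pow_lt_one hq k.ne_zero)
  have outer : HasSum (fun k : ℕ+ ↦ -Real.log (1 - q ^ (k : ℕ))) (-Real.log (eulerFunction q)) :=
    (hasSum_pnat_iff_hasSum_succ (f := fun k ↦ -Real.log (1 - q ^ k))).mpr
      (hasSum_log_one_sub_pow hq).neg
  have double := (summable_pow_mul_div hq).hasSum
  rw [(double.prod_fiberwise inner).unique outer] at double
  simpa only [sigmaNegOne_mul_pow] using
    hasSum_sum_divisorsAntidiagonal (f := fun k n ↦ q ^ (k * n) / n) double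

lemma hasSum_sigmaNegOne_div_mul_pow (hq : ‖q‖ < 1) {d : ℕ} (hd : d ≠ 0) :
    HasSum (fun m ↦ ((if d ∣ m then sigmaNegOne (m / d) else 0 : ℚ) : ℝ) * q ^ m)
      (-Real.log (eulerFunction (q ^ d))) := by
  convert! hasSum_ite_dvd (hasSum_sigmaNegOne_mul_pow (norm_pow_lt_one hq hd)) hd using 2 with m
  split_ifs with h
  · rw [← pow_mul, Nat.mul_div_cancel' h]
  · rw [Rat.cast_zero, zero_mul]

theorem hasSum_cPrime_mul_pow (hq : ‖q‖ < 1) :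
    HasSum (fun m ↦ (cPrime m : ℝ) * q ^ m) (Real.log (∑' k : ℤ, q ^ k.natAbs ^ 2)) := by
  have h1 := eulerFunction_ne_zero hq
  have h2 := eulerFunction_ne_zero (norm_pow_lt_one hq two_ne_zero)
  have h4 := eulerFunction_ne_zero (norm_pow_lt_one hq four_ne_zero)
  have log_theta : Real.log (∑' k : ℤ, q ^ k.natAbs ^ 2) =
      2 * -Real.log (eulerFunction q) - 5 * -Real.log (eulerFunction (q ^ 2))
        + 2 * -Real.log (eulerFunction (q ^ 4)) := by
    rw [(hasSum_pow_natAbs_sq hq).tsum_eq, Real.log_div (by positivity) (by positivity),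
      Real.log_mul (by positivity) (by positivity), Real.log_pow, Real.log_pow, Real.log_pow]
    push_cast
    ring
  rw [log_theta]
  convert! (((hasSum_sigmaNegOne_mul_pow hq).mul_left 2).sub
    ((hasSum_sigmaNegOne_div_mul_pow hq two_ne_zero).mul_left 5)).add
    ((hasSum_sigmaNegOne_div_mul_pow hq four_ne_zero).mul_left 2) using 2 with m
  rw [cPrime]
  push_cast
  ring

end LogSeries

lemma theta_eq_tsum_pow (t : ℝ) :
    theta t = ∑' k : ℤ, Real.exp (-Real.pi * t) ^ k.natAbs ^ 2 := by
  refine tsum_congr fun k ↦ ?_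
  rw [← Real.exp_nat_mul]
  congr 1
  push_cast
  rw [Nat.cast_natAbs, Int.cast_abs, sq_abs]
  ring

/-- the Fourier coefficients of `log θ` are
`c'_m = 2σ₋₁(m) - 5σ₋₁(m/2) + 2σ₋₁(m/4)`. -/
theorem log_theta_fourier (t : ℝ) (ht : 0 < t) :
    Real.log (theta t)
      = ∑' m : ℕ, (cPrime (m + 1) : ℝ) * Real.exp (-Real.pi * (m + 1) * t) := by
  set q := Real.exp (-Real.pi * t) with hq
  have norm_q_lt_one : ‖q‖ < 1 := by
    rw [Real.norm_of_nonneg (Real.exp_nonneg _), Real.exp_lt_one_iff, neg_mul, neg_lt_zero]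
    positivity
  have power_series := hasSum_cPrime_mul_pow norm_q_lt_one
  rw [← hasSum_nat_add_iff' 1] at power_series
  have exp_eq_pow (m : ℕ) : Real.exp (-Real.pi * (m + 1) * t) = q ^ (m + 1) := by
    rw [hq, ← Real.exp_nat_mul]
    push_cast
    ring_nf
  simp only [theta_eq_tsum_pow, exp_eq_pow, ← hq]
  simpa [cPrime, sigmaNegOne] using power_series.tsum_eq.symm
end

section
/- For real u ≥ 0 and integer m ≥ 2, the Fourier coefficients of θ^u satisfy |c_m(u)| ≤ 24 m^{u/2}. -/
/-!
The identity `ϑ(q) ϑ(-q) = ϑ(-q²)²` propagates a zero `q` of `ϑ` in the unit disc along the orbit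
of `q ↦ -q²`, which tends to `0`, whereas `ϑ(0) = 1`. Hence `ϑ` has no zeros in the disc, `ϑ^u` is
the restriction of a holomorphic function `F` there with `|F| = |ϑ|^u`, and the `m`-th Taylor
coefficient of `F` is `c_m(u)` by the binomial series. Cauchy's estimate on the circle of radius
`R = e^{-1.01π/m}` then costs a factor `R^{-m} = e^{1.01π} ≤ 24`, and on that circle the functional
equation gives `|ϑ| ≤ ϑ(R) = √(m/1.01) ϑ(e^{-πm/1.01}) ≤ √m`.
-/

open Asymptotics Filter Metric Polynomial Topology

section Asymptotics

variable {𝕜 : Type*} [NontriviallyNormedField 𝕜]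

theorem natCast_le_analyticOrderAt_of_isBigO {E : Type*} [NormedAddCommGroup E] [NormedSpace 𝕜 E]
    {f : 𝕜 → E} {z₀ : 𝕜} {n : ℕ} (hf : AnalyticAt 𝕜 f z₀)
    (h : f =O[𝓝 z₀] fun z => (z - z₀) ^ n) : n ≤ analyticOrderAt f z₀ := by
  by_contra! hlt
  obtain ⟨k, hk⟩ := ENat.ne_top_iff_exists.mp hlt.ne_top
  rw [← hk, Nat.cast_lt] at hlt
  obtain ⟨g, hg, hg₀, hfg⟩ := hf.analyticOrderAt_eq_natCast.mp hk.symm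
  have hone : (fun _ => (1 : 𝕜)) =O[𝓝 z₀] g :=
    (isBigO_const_left_iff_pos_le_norm one_ne_zero).mpr
      ⟨‖g z₀‖ / 2, by positivity, (hg.continuousAt.norm.eventually_const_lt
        (half_lt_self (norm_pos_iff.mpr hg₀))).mono fun _ => le_of_lt⟩
  have hlower : (fun z => (z - z₀) ^ k) =O[𝓝 z₀] f :=
    ((isBigO_refl (fun z => (z - z₀) ^ k) (𝓝 z₀)).smul hone).congr' (by simp)
      (EventuallyEq.symm hfg)
  have hsub : Tendsto (· - z₀) (𝓝 z₀) (𝓝 0) := tendsto_sub_nhds_zero_iff.mpr tendsto_id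
  have hlittle : (fun z => (z - z₀) ^ n) =o[𝓝 z₀] fun z => (z - z₀) ^ k :=
    (isLittleO_pow_pow hlt).comp_tendsto hsub
  refine isLittleO_irrefl ?_ ((hlower.trans h).trans_isLittleO hlittle)
  have hne : ∃ᶠ z in 𝓝 z₀, z ≠ z₀ :=
    (eventually_mem_nhdsWithin (s := {z₀}ᶜ)).frequently.filter_mono nhdsWithin_le_nhds
  exact hne.mono fun z hz => pow_ne_zero k (sub_ne_zero.mpr hz)

theorem iteratedDeriv_eval (P : 𝕜[X]) (n : ℕ) :
    iteratedDeriv n (fun x => P.eval x) = fun x => (derivative^[n] P).eval x := by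
  induction n with
  | zero => simp
  | succ n ih =>
    ext x
    rw [iteratedDeriv_succ, ih, Function.iterate_succ_apply', Polynomial.deriv]

theorem iteratedDeriv_eval_zero (P : 𝕜[X]) (n : ℕ) :
    iteratedDeriv n (fun x => P.eval x) 0 = n.factorial * P.coeff n := by
  simp [iteratedDeriv_eval, ← coeff_zero_eq_eval_zero, coeff_iterate_derivative,
    Nat.descFactorial_self]

theorem iteratedDeriv_eq_of_sub_eval_isBigO [CharZero 𝕜] [CompleteSpace 𝕜] {f : 𝕜 → 𝕜} {P : 𝕜[X]}
    {n : ℕ} (hf : AnalyticAt 𝕜 f 0)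
    (h : (fun z => f z - P.eval z) =O[𝓝 0] fun z => z ^ (n + 1)) :
    iteratedDeriv n f 0 = n.factorial * P.coeff n := by
  have hP : AnalyticAt 𝕜 (fun z => P.eval z) 0 := by
    simpa using AnalyticAt.aeval_polynomial (analyticAt_id (𝕜 := 𝕜) (z := (0 : 𝕜))) P
  have hfP := hf.fun_sub hP
  have hzero := (natCast_le_analyticOrderAt_iff_iteratedDeriv_eq_zero hfP).mp
    (natCast_le_analyticOrderAt_of_isBigO hfP (by simpa using h)) n n.lt_succ_self
  rwa [iteratedDeriv_fun_sub hf.contDiffAt hP.contDiffAt, iteratedDeriv_eval_zero, sub_eq_zero]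
    at hzero

theorem isBigO_comp_sub_eval_comp {f w : 𝕜 → 𝕜} {P Q : 𝕜[X]} {n : ℕ}
    (hf : (fun x => f x - P.eval x) =O[𝓝 0] fun x => x ^ (n + 1))
    (hw : (fun z => w z - Q.eval z) =O[𝓝 0] fun z => z ^ (n + 1))
    (hw₀ : w =O[𝓝 0] id) :
    (fun z => f (w z) - (P.comp Q).eval z) =O[𝓝 0] fun z => z ^ (n + 1) := by
  have hwlim : Tendsto w (𝓝 0) (𝓝 0) := hw₀.trans_tendsto tendsto_id
  have hpow : Tendsto (fun z : 𝕜 => z ^ (n + 1)) (𝓝 0) (𝓝 0) := by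
    simpa using (continuous_pow (M := 𝕜) (n + 1)).tendsto 0
  have hQlim : Tendsto (fun z => Q.eval z) (𝓝 0) (𝓝 0) := by
    simpa using hwlim.sub (hw.trans_tendsto hpow)
  have houter : (fun z => f (w z) - P.eval (w z)) =O[𝓝 0] fun z => z ^ (n + 1) :=
    (hf.comp_tendsto hwlim).trans (hw₀.pow (n + 1))
  have hinner : (fun z => P.eval (w z) - P.eval (Q.eval z)) =O[𝓝 0] fun z => z ^ (n + 1) :=
    ((P.hasStrictDerivAt 0).isBigO_sub.comp_tendsto (hwlim.prodMk_nhds hQlim)).trans hw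
  simpa [eval_comp] using houter.add hinner

end Asymptotics

section Complex

theorem norm_coeff_le_of_forall_mem_sphere_norm_le {F : ℂ → ℂ} {P : ℂ[X]} {n : ℕ} {R C : ℝ}
    (hR : 0 < R) (hF : DifferentiableOn ℂ F (closedBall 0 R)) (hC : ∀ z ∈ sphere 0 R, ‖F z‖ ≤ C)
    (hP : (fun z => F z - P.eval z) =O[𝓝 0] fun z => z ^ (n + 1)) :
    ‖P.coeff n‖ ≤ C / R ^ n := by
  have hcauchy := Complex.norm_iteratedDeriv_le_of_forall_mem_sphere_norm_le n hR
    (hF.diffContOnCl_ball subset_rfl) hC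
  rw [iteratedDeriv_eq_of_sub_eval_isBigO (hF.analyticAt (closedBall_mem_nhds 0 hR)) hP, norm_mul,
    Complex.norm_natCast, mul_div_assoc] at hcauchy
  exact le_of_mul_le_mul_left hcauchy (by positivity)

theorem one_add_cpow_sub_eval_trunc_isBigO (a : ℂ) (n : ℕ) :
    (fun w => (1 + w) ^ a - ((PowerSeries.binomialSeries ℂ a).trunc n).eval w)
      =O[𝓝 0] fun w => w ^ n := by
  have h := (Complex.one_add_cpow_hasFPowerSeriesAt_zero (a := a)).isBigO_sub_partialSum_pow n
  refine (h.congr_left fun w => ?_).trans ?_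
  · simp [FormalMultilinearSeries.partialSum, binomialSeries, eval,
      FormalMultilinearSeries.coeff_ofScalars, mul_comm, PowerSeries.eval₂_trunc_eq_sum_range]
  · exact (isBigO_refl _ _).norm_left.congr_left (by simp)

theorem exists_exp_eq_of_differentiableOn_ball {f : ℂ → ℂ} {c : ℂ} {r : ℝ}
    (hf : DifferentiableOn ℂ f (ball c r)) (hf₀ : ∀ z ∈ ball c r, f z ≠ 0) :
    ∃ g : ℂ → ℂ, DifferentiableOn ℂ g (ball c r) ∧ g c = Complex.log (f c) ∧
      ∀ z ∈ ball c r, Complex.exp (g z) = f z := by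
  have hlogDeriv : DifferentiableOn ℂ (logDeriv f) (ball c r) := (hf.deriv isOpen_ball).div hf hf₀
  obtain ⟨g, hgc, hg⟩ := hlogDeriv.isExactOn_ball.with_val_at c (Complex.log (f c))
  have hgd : DifferentiableOn ℂ g (ball c r) :=
    fun z hz => (hg z hz).differentiableAt.differentiableWithinAt
  refine ⟨g, hgd, hgc, fun z hz => ?_⟩
  have hc : c ∈ ball c r := mem_ball_self (pos_of_mem_ball hz)
  have hderiv : ∀ x ∈ ball c r, HasDerivAt (fun x => f x * Complex.exp (-g x)) 0 x := by
    intro x hx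
    have hfx := (hf.differentiableAt (isOpen_ball.mem_nhds hx)).hasDerivAt
    refine (hfx.mul (hg x hx).neg.cexp).congr_deriv ?_
    rw [logDeriv_apply]
    field_simp [hf₀ x hx]
    ring
  have hconst : f z * Complex.exp (-g z) = f c * Complex.exp (-g c) :=
    isOpen_ball.is_const_of_deriv_eq_zero (convex_ball c r).isPreconnected
      (fun x hx => (hderiv x hx).differentiableAt.differentiableWithinAt)
      (fun x hx => (hderiv x hx).deriv) hz hc
  rw [hgc, Complex.exp_neg, Complex.exp_neg, Complex.exp_log (hf₀ c hc),
    mul_inv_cancel₀ (hf₀ c hc)] at hconst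
  exact (eq_of_mul_inv_eq_one hconst).symm

theorem exists_differentiableOn_ball_eventuallyEq_cpow {f : ℂ → ℂ} {c : ℂ} {r : ℝ} (hr : 0 < r)
    (hf : DifferentiableOn ℂ f (ball c r)) (hf₀ : ∀ z ∈ ball c r, f z ≠ 0)
    (hfc : f c ∈ Complex.slitPlane) (u : ℝ) :
    ∃ F : ℂ → ℂ, DifferentiableOn ℂ F (ball c r) ∧ (∀ z ∈ ball c r, ‖F z‖ = ‖f z‖ ^ u) ∧
      F =ᶠ[𝓝 c] fun z => f z ^ (u : ℂ) := by
  obtain ⟨g, hg, hgc, hexp⟩ := exists_exp_eq_of_differentiableOn_ball hf hf₀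
  refine ⟨fun z => Complex.exp (g z * u), (hg.mul_const _).cexp, fun z hz => ?_, ?_⟩
  · simp [← hexp z hz, Complex.norm_exp, Real.exp_mul]
  · have hball : ball c r ∈ 𝓝 c := ball_mem_nhds c hr
    have him : ∀ᶠ z in 𝓝 c, (g z).im ∈ Set.Ioo (-Real.pi) Real.pi := by
      have hcont : ContinuousAt (fun z => (g z).im) c :=
        Complex.continuous_im.continuousAt.comp (hg.differentiableAt hball).continuousAt
      refine hcont.eventually (isOpen_Ioo.mem_nhds ?_)
      change (g c).im ∈ _
      rw [hgc, Complex.log_im]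
      exact ⟨Complex.neg_pi_lt_arg _, (Complex.arg_le_pi _).lt_of_ne
        (Complex.mem_slitPlane_iff_arg.mp hfc).1⟩
    filter_upwards [hball, him] with z hz hzim
    rw [Complex.cpow_def_of_ne_zero (hf₀ z hz), ← hexp z hz, Complex.log_exp hzim.1 hzim.2.le]

end Complex

/-- The theta series `ϑ(q) = ∑_{n ∈ ℤ} q^{n²}` as a function of the nome `q`. The exponent is a
natural number, so that this is a power series in `q`, with value `1` at `q = 0`. -/
noncomputable def nomeTheta {K : Type*} [NormedField K] (q : K) : K :=
  ∑' n : ℤ, q ^ n.natAbs ^ 2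

section Theta

theorem summable_pow_natAbs_sq {r : ℝ} (h₀ : 0 ≤ r) (h₁ : r < 1) :
    Summable fun n : ℤ => r ^ n.natAbs ^ 2 := by
  have hnat : Summable fun n : ℕ => r ^ n ^ 2 :=
    (summable_geometric_of_lt_one h₀ h₁).of_nonneg_of_le (fun n => by positivity)
      fun n => pow_le_pow_of_le_one h₀ h₁.le (Nat.le_self_pow two_ne_zero n)
  exact .of_nat_of_neg (by simpa using hnat) (by simpa using hnat)

theorem tsum_int_prod_eq_tsum_add_sub {M : Type*} [AddCommMonoid M] [TopologicalSpace M]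
    {f : ℤ × ℤ → M} (hf : ∀ x, Odd (x.1 + x.2) → f x = 0) :
    ∑' x, f x = ∑' x : ℤ × ℤ, f (x.1 + x.2, x.1 - x.2) := by
  have hinj : Function.Injective fun x : ℤ × ℤ => (x.1 + x.2, x.1 - x.2) := by
    rintro ⟨a, b⟩ ⟨c, d⟩ h
    simp only [Prod.mk.injEq] at h ⊢
    lia
  refine (hinj.tsum_eq fun x hx => ?_).symm
  obtain ⟨c, hc⟩ := Int.not_odd_iff_even.mp fun hodd => hx (hf x hodd)
  exact ⟨(c, x.1 - c), Prod.ext (by simp) (by simp; lia)⟩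

theorem neg_pow_natAbs_sq {R : Type*} [DivisionRing R] (q : R) (n : ℤ) :
    (-q) ^ n.natAbs ^ 2 = (-1) ^ n * q ^ n.natAbs ^ 2 := by
  rcases n.even_or_odd with hn | hn
  · rw [hn.neg_one_zpow, one_mul, ((Int.natAbs_even.mpr hn).pow_of_ne_zero two_ne_zero).neg_pow]
  · rw [hn.neg_one_zpow, neg_one_mul, (Int.natAbs_odd.mpr hn).pow.neg_pow]

theorem neg_one_zpow_sub {R : Type*} [DivisionRing R] (c d : ℤ) :
    (-1 : R) ^ (c - d) = (-1) ^ (c + d) := by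
  rw [zpow_sub₀ (neg_ne_zero.mpr one_ne_zero), zpow_add₀ (neg_ne_zero.mpr one_ne_zero),
    div_eq_mul_inv, ← inv_zpow, inv_neg_one]

theorem neg_one_zpow_add_neg_one_zpow_eq_zero {R : Type*} [DivisionRing R] {c d : ℤ}
    (h : Odd (c + d)) :
    (-1 : R) ^ c + (-1) ^ d = 0 := by
  rcases c.even_or_odd with hc | hc
  · rw [hc.neg_one_zpow, (Int.odd_add'.mp h |>.mpr hc).neg_one_zpow, add_neg_cancel]
  · rw [hc.neg_one_zpow, (Int.odd_add.mp h |>.mp hc).neg_one_zpow, neg_add_cancel]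

theorem pow_natAbs_add_sq_mul_pow_natAbs_sub_sq {M : Type*} [Monoid M] (q : M) (c d : ℤ) :
    q ^ (c + d).natAbs ^ 2 * q ^ (c - d).natAbs ^ 2 =
      (q ^ 2) ^ c.natAbs ^ 2 * (q ^ 2) ^ d.natAbs ^ 2 := by
  have hparallelogram : (c + d).natAbs ^ 2 + (c - d).natAbs ^ 2
      = 2 * c.natAbs ^ 2 + 2 * d.natAbs ^ 2 := by
    zify
    simp only [sq_abs]
    ring
  rw [← pow_add, hparallelogram, pow_add, pow_mul, pow_mul]

variable {K : Type*} [NormedField K] {q : K}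

theorem summable_norm_pow_natAbs_sq (hq : ‖q‖ < 1) : Summable fun n : ℤ => ‖q ^ n.natAbs ^ 2‖ := by
  simp only [norm_pow]
  exact summable_pow_natAbs_sq (norm_nonneg q) hq

theorem norm_nomeTheta_le (hq : ‖q‖ < 1) : ‖nomeTheta q‖ ≤ nomeTheta ‖q‖ := by
  simpa only [nomeTheta, norm_pow] using
    norm_tsum_le_tsum_norm (f := fun n : ℤ => q ^ n.natAbs ^ 2) (summable_norm_pow_natAbs_sq hq)

theorem norm_tsum_pow_add_sq_le (hq : ‖q‖ < 1) (m : ℕ) :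
    ‖∑' n : ℕ, q ^ (n + m + 1) ^ 2‖ ≤ ‖q‖ ^ (m + 1) * (1 - ‖q‖)⁻¹ := by
  refine tsum_of_norm_bounded
    ((hasSum_geometric_of_lt_one (norm_nonneg q) hq).mul_left (‖q‖ ^ (m + 1))) fun n => ?_
  rw [norm_pow, ← pow_add]
  exact pow_le_pow_of_le_one (norm_nonneg q) hq.le (by nlinarith)

section CompleteSpace

variable [CompleteSpace K]

theorem summable_pow_add_one_sq (hq : ‖q‖ < 1) : Summable fun n : ℕ => q ^ (n + 1) ^ 2 := by
  have hinj : Function.Injective fun n : ℕ => ((n + 1 : ℕ) : ℤ) := fun _ _ h => by simpa using h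
  simpa only [Function.comp_def, Int.natAbs_natCast] using
    (summable_norm_pow_natAbs_sq hq).of_norm.comp_injective hinj

theorem nomeTheta_eq_one_add (hq : ‖q‖ < 1) :
    nomeTheta q = 1 + 2 * ∑' n : ℕ, q ^ (n + 1) ^ 2 := by
  have hsum := (summable_norm_pow_natAbs_sq hq).of_norm
  have heven : Function.Even fun n : ℤ => q ^ n.natAbs ^ 2 := fun n => by simp
  have hsucc : ∀ n : ℕ, ((n : ℤ) + 1).natAbs = n + 1 := by lia
  rw [nomeTheta, tsum_int_eq_zero_add_two_mul_tsum_pnat heven hsum,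
    tsum_pnat_eq_tsum_succ (f := fun n : ℕ => q ^ (n : ℤ).natAbs ^ 2)]
  simp [hsucc]

theorem two_mul_nomeTheta_mul_nomeTheta_neg (hq : ‖q‖ < 1) :
    2 * (nomeTheta q * nomeTheta (-q)) = ∑' x : ℤ × ℤ,
      ((-1) ^ x.1 + (-1) ^ x.2) * (q ^ x.1.natAbs ^ 2 * q ^ x.2.natAbs ^ 2) := by
  let s (x : ℤ × ℤ) : K := q ^ x.1.natAbs ^ 2 * q ^ x.2.natAbs ^ 2
  have hsum := summable_norm_pow_natAbs_sq hq
  have hsum_neg := summable_norm_pow_natAbs_sq ((norm_neg q).trans_lt hq)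
  have hfst : Summable fun x : ℤ × ℤ => (-1) ^ x.1 * s x :=
    (summable_mul_of_summable_norm hsum_neg hsum).congr fun x => by
      rw [neg_pow_natAbs_sq, mul_assoc]
  have hsnd : Summable fun x : ℤ × ℤ => (-1) ^ x.2 * s x :=
    ((Equiv.prodComm ℤ ℤ).summable_iff.mpr hfst).congr fun x => by simp [s, mul_comm]
  have hprod : nomeTheta q * nomeTheta (-q) = ∑' x, (-1) ^ x.1 * s x := by
    rw [mul_comm, nomeTheta, nomeTheta, tsum_mul_tsum_of_summable_norm hsum_neg hsum]
    simp only [neg_pow_natAbs_sq, s, mul_assoc]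
  have hswap : ∑' x, (-1) ^ x.2 * s x = ∑' x, (-1) ^ x.1 * s x := by
    rw [← (Equiv.prodComm ℤ ℤ).tsum_eq]
    simp [s, mul_comm]
  simp only [add_mul]
  rw [hfst.tsum_add hsnd, hswap, hprod, two_mul]

theorem nomeTheta_mul_nomeTheta_neg [CharZero K] (hq : ‖q‖ < 1) :
    nomeTheta q * nomeTheta (-q) = nomeTheta (-q ^ 2) ^ 2 := by
  have hsum := summable_norm_pow_natAbs_sq (q := -q ^ 2)
    (by simpa using pow_lt_one₀ (norm_nonneg q) hq two_ne_zero)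
  refine mul_left_cancel₀ (two_ne_zero (α := K)) ?_
  rw [two_mul_nomeTheta_mul_nomeTheta_neg hq, tsum_int_prod_eq_tsum_add_sub fun x hx => by
      rw [neg_one_zpow_add_neg_one_zpow_eq_zero hx, zero_mul],
    sq (nomeTheta _), nomeTheta, tsum_mul_tsum_of_summable_norm hsum hsum, ← tsum_mul_left]
  refine tsum_congr fun x => ?_
  rw [pow_natAbs_add_sq_mul_pow_natAbs_sub_sq, neg_one_zpow_sub, neg_pow_natAbs_sq,
    neg_pow_natAbs_sq, zpow_add₀ (neg_ne_zero.mpr one_ne_zero)]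
  ring

end CompleteSpace

theorem nomeTheta_zero : nomeTheta (0 : K) = 1 := by
  rw [nomeTheta, tsum_eq_single 0] <;> simp +contextual

theorem differentiableOn_nomeTheta : DifferentiableOn ℂ nomeTheta (ball (0 : ℂ) 1) := by
  intro q hq
  obtain ⟨r, hqr, hr⟩ := exists_between (mem_ball_zero_iff.mp hq)
  have hball : DifferentiableOn ℂ nomeTheta (ball (0 : ℂ) r) :=
    Complex.differentiableOn_tsum_of_summable_norm
      (summable_pow_natAbs_sq ((norm_nonneg q).trans hqr.le) hr) (fun n => by fun_prop) isOpen_ball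
      fun n z hz => by
        rw [norm_pow]
        exact pow_le_pow_left₀ (norm_nonneg z) (mem_ball_zero_iff.mp hz).le _
  exact (hball.differentiableAt
    (isOpen_ball.mem_nhds (mem_ball_zero_iff.mpr hqr))).differentiableWithinAt

theorem norm_iterate_neg_sq (q : K) (n : ℕ) : ‖(fun z => -z ^ 2)^[n] q‖ = ‖q‖ ^ 2 ^ n := by
  induction n with
  | zero => simp
  | succ n ih => rw [Function.iterate_succ_apply', norm_neg, norm_pow, ih, ← pow_mul, pow_succ 2]

theorem tendsto_iterate_neg_sq (hq : ‖q‖ < 1) :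
    Tendsto (fun n => (fun z => -z ^ 2)^[n] q) atTop (𝓝 0) := by
  rw [tendsto_zero_iff_norm_tendsto_zero]
  simp only [norm_iterate_neg_sq]
  exact (tendsto_pow_atTop_nhds_zero_of_lt_one (norm_nonneg q) hq).comp
    (tendsto_pow_atTop_atTop_of_one_lt one_lt_two)

theorem nomeTheta_ne_zero {q : ℂ} (hq : ‖q‖ < 1) : nomeTheta q ≠ 0 := by
  intro hzero
  have hiterate : ∀ n, nomeTheta ((fun z => -z ^ 2)^[n] q) = 0 := by
    intro n
    induction n with
    | zero => exact hzero
    | succ n ih =>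
      have hlt : ‖(fun z => -z ^ 2)^[n] q‖ < 1 :=
        (norm_iterate_neg_sq q n).trans_lt (pow_lt_one₀ (norm_nonneg q) hq (by simp))
      rw [Function.iterate_succ_apply', ← sq_eq_zero_iff, ← nomeTheta_mul_nomeTheta_neg hlt, ih,
        zero_mul]
  have hcont : ContinuousAt nomeTheta (0 : ℂ) :=
    (differentiableOn_nomeTheta.differentiableAt (ball_mem_nhds 0 one_pos)).continuousAt
  have hlim := hcont.tendsto.comp (tendsto_iterate_neg_sq hq)
  simp only [Function.comp_def, hiterate, nomeTheta_zero] at hlim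
  exact zero_ne_one (tendsto_nhds_unique tendsto_const_nhds hlim)

theorem nomeTheta_le_of_lt_one {r : ℝ} (h₀ : 0 ≤ r) (h₁ : r < 1) :
    nomeTheta r ≤ 1 + 2 * (r * (1 - r)⁻¹) := by
  have hnorm : ‖r‖ = r := Real.norm_of_nonneg h₀
  have htail := (le_abs_self _).trans (norm_tsum_pow_add_sq_le (hnorm.trans_lt h₁) 0)
  rw [nomeTheta_eq_one_add (hnorm.trans_lt h₁)]
  simp only [hnorm, add_zero, zero_add, pow_one] at htail
  linarith

theorem exp_pow_natAbs_sq (c : ℝ) (n : ℤ) :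
    Real.exp c ^ n.natAbs ^ 2 = Real.exp (c * (n : ℝ) ^ 2) := by
  rw [← Real.exp_nat_mul, Nat.cast_pow, Nat.cast_natAbs, Int.cast_abs, sq_abs, mul_comm]

theorem nomeTheta_exp_neg_pi_mul {t : ℝ} (ht : 0 < t) :
    nomeTheta (Real.exp (-Real.pi * t)) = nomeTheta (Real.exp (-Real.pi / t)) / √t := by
  simp only [nomeTheta, exp_pow_natAbs_sq]
  rw [Real.tsum_exp_neg_mul_int_sq ht, Real.sqrt_eq_rpow, one_div_mul_eq_div]

theorem exp_neg_pi_div_le {t : ℝ} (ht₀ : 0 < t) (ht : t ≤ 0.505) :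
    Real.exp (-Real.pi / t) ≤ 1 / 403 := by
  have hneg : -Real.pi / t ≤ -6 := by
    rw [div_le_iff₀ ht₀]
    linarith [Real.pi_gt_d4]
  have hexp : (403 : ℝ) ≤ Real.exp 6 := by
    calc (403 : ℝ) ≤ 2.7182818283 ^ 6 := by norm_num
      _ ≤ Real.exp 1 ^ 6 := by gcongr; exact Real.exp_one_gt_d9.le
      _ = Real.exp 6 := by rw [← Real.exp_nat_mul]; norm_num
  calc Real.exp (-Real.pi / t) ≤ Real.exp (-6) := Real.exp_le_exp.mpr hneg
    _ ≤ 1 / 403 := by rw [Real.exp_neg, ← one_div]; gcongr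

theorem exp_mul_pi_le : Real.exp (1.01 * Real.pi) ≤ 24 := by
  rw [← Real.le_log_iff_exp_le (by norm_num), show (24 : ℝ) = 2 ^ 3 * 3 by norm_num,
    Real.log_mul (by norm_num) (by norm_num), Real.log_pow]
  norm_num
  linarith [Real.log_two_gt_d9, Real.log_three_gt_d9, Real.pi_lt_d4]

theorem norm_nomeTheta_le_sqrt {x : ℝ} (hx : 2 ≤ x)
    (hq : ‖q‖ = Real.exp (-Real.pi * (1.01 / x))) : ‖nomeTheta q‖ ≤ √x := by
  have ht : 0 < 1.01 / x := by positivity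
  have hq₁ : ‖q‖ < 1 := by
    rw [hq, Real.exp_lt_one_iff, neg_mul, neg_lt_zero]
    positivity
  set s := Real.exp (-Real.pi / (1.01 / x))
  have hs₀ : 0 ≤ s := Real.exp_nonneg _
  have ht_le : 1.01 / x ≤ 0.505 := by
    rw [div_le_iff₀ (by linarith)]
    linarith
  have hs : s ≤ 1 / 403 := exp_neg_pi_div_le ht ht_le
  have hfrac : s * (1 - s)⁻¹ ≤ 1 / 402 := by
    rw [← div_eq_mul_inv, div_le_iff₀ (by linarith)]
    linarith
  have htheta : nomeTheta s ≤ √1.01 :=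
    calc nomeTheta s ≤ 1 + 2 * (s * (1 - s)⁻¹) := nomeTheta_le_of_lt_one hs₀ (by linarith)
      _ ≤ 1 + 2 * (1 / 402) := by gcongr
      _ ≤ √1.01 := Real.le_sqrt_of_sq_le (by norm_num)
  calc ‖nomeTheta q‖ ≤ nomeTheta ‖q‖ := norm_nomeTheta_le hq₁
    _ = nomeTheta s / √(1.01 / x) := by rw [hq, nomeTheta_exp_neg_pi_mul ht]
    _ ≤ √1.01 / √(1.01 / x) := by gcongr
    _ = √x := by rw [← Real.sqrt_div' _ ht.le, div_div_cancel₀ (by norm_num)]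

end Theta

/-- Truncation of `∑_{n ≥ 1} q^{n²}` after the term `n = m`. The index type is that of the tuples
counted by `repCount`. -/
noncomputable def squareTrunc (R : Type*) [Semiring R] (m : ℕ) : R[X] :=
  ∑ n : Fin (m + 1) with 1 ≤ n.1, X ^ n.1 ^ 2

section Coefficients

theorem coeff_squareTrunc_pow {R : Type*} [CommSemiring R] (j m : ℕ) :
    (squareTrunc R m ^ j).coeff m = repCount j m := by
  have hpow : squareTrunc R m ^ j =
      ∑ f : Fin j → Fin (m + 1) with ∀ i, 1 ≤ (f i).1, X ^ ∑ i, (f i).1 ^ 2 := by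
    rw [squareTrunc, ← Fin.prod_const, Finset.prod_univ_sum]
    exact Finset.sum_congr (by ext; simp) fun f _ => Finset.prod_pow_eq_pow_sum ..
  rw [hpow, finsetSum_coeff, repCount, ← Finset.filter_filter, Finset.card_filter]
  simp [coeff_X_pow, eq_comm]

theorem eval_squareTrunc {R : Type*} [Semiring R] (m : ℕ) (x : R) :
    (squareTrunc R m).eval x = ∑ n ∈ Finset.range m, x ^ (n + 1) ^ 2 := by
  rw [squareTrunc, Finset.sum_filter, Fin.sum_univ_succ, Finset.sum_range, eval_add,
    eval_finsetSum]
  simp [eval_X_pow]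

theorem nomeTheta_sub_one_sub_eval_isBigO {K : Type*} [NormedField K] [CompleteSpace K] (m : ℕ) :
    (fun z : K => nomeTheta z - 1 - (C 2 * squareTrunc K m).eval z)
      =O[𝓝 0] fun z => z ^ (m + 1) := by
  refine .of_bound (‖(2 : K)‖ * 2) ?_
  filter_upwards [ball_mem_nhds (0 : K) one_half_pos] with z hz
  have hz₂ : ‖z‖ < 1 / 2 := mem_ball_zero_iff.mp hz
  have hz₁ : ‖z‖ < 1 := hz₂.trans one_half_lt_one
  have hsum : Summable fun n : ℕ => z ^ (n + 1) ^ 2 := summable_pow_add_one_sq hz₁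
  have htail : nomeTheta z - 1 - (C 2 * squareTrunc K m).eval z =
      2 * ∑' n : ℕ, z ^ (n + m + 1) ^ 2 := by
    rw [nomeTheta_eq_one_add hz₁, eval_mul, eval_C, eval_squareTrunc, ← hsum.sum_add_tsum_nat_add m]
    ring
  have hinv : (1 - ‖z‖)⁻¹ ≤ 2 := inv_le_of_inv_le₀ two_pos (by linarith)
  calc ‖nomeTheta z - 1 - (C 2 * squareTrunc K m).eval z‖
      ≤ ‖(2 : K)‖ * (‖z‖ ^ (m + 1) * (1 - ‖z‖)⁻¹) := by
        rw [htail, norm_mul]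
        gcongr
        exact norm_tsum_pow_add_sq_le hz₁ m
    _ ≤ ‖(2 : K)‖ * (‖z‖ ^ (m + 1) * 2) := by gcongr
    _ = ‖(2 : K)‖ * 2 * ‖z ^ (m + 1)‖ := by rw [norm_pow]; ring

theorem aeval_binomPoly {K : Type*} [Field K] [CharZero K] (a : K) (j : ℕ) :
    aeval a (binomPoly j) = Ring.choose a j := by
  rw [Ring.choose_eq_smul, ← eval₂_smulOneHom_eq_smeval, ← eval_map,
    descPochhammer_map, descPochhammer_eval_eq_prod_range, binomPoly]
  simp [map_prod]

theorem coeff_trunc_binomialSeries_comp_squareTrunc {K : Type*} [Field K] [CharZero K] (a : K)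
    {m : ℕ} (hm : m ≠ 0) :
    (((PowerSeries.binomialSeries K a).trunc (m + 1)).comp (C 2 * squareTrunc K m)).coeff m =
      aeval a (thetaCoeff m) := by
  have hcomp : ((PowerSeries.binomialSeries K a).trunc (m + 1)).comp (C 2 * squareTrunc K m) =
      ∑ j ∈ Finset.range (m + 1), C (Ring.choose a j * 2 ^ j) * squareTrunc K m ^ j := by
    rw [comp, PowerSeries.eval₂_trunc_eq_sum_range]
    simp [mul_pow, mul_assoc]
  rw [hcomp, finsetSum_coeff, thetaCoeff, map_sum, Finset.range_eq_Ico,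
    Finset.sum_eq_sum_Ico_succ_bot (Nat.add_one_pos m), zero_add,
    Finset.Ico_add_one_right_eq_Icc, pow_zero (squareTrunc K m), mul_one,
    coeff_C_of_ne_zero hm, zero_add]
  refine Finset.sum_congr rfl fun j _ => ?_
  rw [coeff_C_mul, coeff_squareTrunc_pow, map_smul, aeval_binomPoly, Rat.smul_def]
  push_cast
  ring

theorem nomeTheta_cpow_sub_eval_isBigO (a : ℂ) (n : ℕ) :
    (fun z => nomeTheta z ^ a - (((PowerSeries.binomialSeries ℂ a).trunc (n + 1)).comp
      (C 2 * squareTrunc ℂ n)).eval z) =O[𝓝 0] fun z => z ^ (n + 1) := by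
  have hlinear : (fun z : ℂ => nomeTheta z - 1) =O[𝓝 0] id := by
    simpa [nomeTheta_zero] using!
      (differentiableOn_nomeTheta.differentiableAt (ball_mem_nhds 0 one_pos)).isBigO_sub
  simpa using isBigO_comp_sub_eval_comp (one_add_cpow_sub_eval_trunc_isBigO a (n + 1))
    (nomeTheta_sub_one_sub_eval_isBigO n) hlinear

theorem abs_aeval_thetaCoeff_le {u R M : ℝ} {m : ℕ} (hu : 0 ≤ u) (hm : m ≠ 0) (hR₀ : 0 < R)
    (hR₁ : R < 1) (hM : ∀ z : ℂ, ‖z‖ = R → ‖nomeTheta z‖ ≤ M) :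
    |aeval u (thetaCoeff m)| ≤ M ^ u / R ^ m := by
  obtain ⟨F, hF, hFnorm, hFeq⟩ := exists_differentiableOn_ball_eventuallyEq_cpow one_pos
    differentiableOn_nomeTheta (fun z hz => nomeTheta_ne_zero (mem_ball_zero_iff.mp hz))
    (by simp [nomeTheta_zero]) u
  have hclosedBall : closedBall (0 : ℂ) R ⊆ ball 0 1 := closedBall_subset_ball hR₁
  have hFM : ∀ z ∈ sphere 0 R, ‖F z‖ ≤ M ^ u := fun z hz =>
    (hFnorm z (hclosedBall (sphere_subset_closedBall hz))).trans_le
      (Real.rpow_le_rpow (norm_nonneg _) (hM z (mem_sphere_zero_iff_norm.mp hz)) hu)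
  have hcoeff := norm_coeff_le_of_forall_mem_sphere_norm_le hR₀ (hF.mono hclosedBall) hFM
    ((nomeTheta_cpow_sub_eval_isBigO u m).congr' (hFeq.symm.sub .rfl) .rfl)
  rwa [coeff_trunc_binomialSeries_comp_squareTrunc _ hm, ← Complex.coe_algebraMap,
    aeval_algebraMap_apply, Complex.coe_algebraMap, Complex.norm_real, Real.norm_eq_abs] at hcoeff

end Coefficients

/-- for real `u ≥ 0` and `m ≥ 2`, `|c_m(u)| ≤ 24 m^{u/2}`. -/
theorem thetaCoeff_bound (u : ℝ) (hu : 0 ≤ u) (m : ℕ) (hm : 2 ≤ m) :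
    |Polynomial.aeval u (thetaCoeff m)| ≤ 24 * (m : ℝ) ^ (u / 2) := by
  have hm₀ : (0 : ℝ) < m := by positivity
  set R := Real.exp (-Real.pi * (1.01 / m)) with hR
  have hR₁ : R < 1 := by
    rw [hR, Real.exp_lt_one_iff, neg_mul, neg_lt_zero]
    positivity
  have hRm : (R ^ m)⁻¹ = Real.exp (1.01 * Real.pi) := by
    rw [hR, ← Real.exp_nat_mul, ← Real.exp_neg]
    congr 1
    field_simp
  calc |aeval u (thetaCoeff m)| ≤ √m ^ u / R ^ m :=
        abs_aeval_thetaCoeff_le hu (by lia) (Real.exp_pos _) hR₁ fun _ =>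
          norm_nomeTheta_le_sqrt (by exact_mod_cast hm)
    _ = Real.exp (1.01 * Real.pi) * (m : ℝ) ^ (u / 2) := by
        rw [div_eq_mul_inv, hRm, mul_comm, ← Real.rpow_div_two_eq_sqrt u hm₀.le]
    _ ≤ 24 * (m : ℝ) ^ (u / 2) := by
        gcongr
        exact exp_mul_pi_le
end
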